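/- arXiv:1612.01983 — 3 statements merged into one kernel-verified Lean document; each statement's English description precedes it below -/
import Mathlib

section
/- The probability that f(3) = ∞ is either 0 or 1: P(f(3) = ∞) ∈ {0, 1}. -/
open MeasureTheory ProbabilityTheory

/-!
Cut the walk at its first return to `0` at a time `≥ n`, and again at the first return to `0` at
least `n` steps later. The two blocks so obtained are i.i.d., so exchanging them preserves the law
of the walk. The exchange does not affect whether a relation between the current site and the local
times holds infinitely often: after both blocks the walk is back at `0` and their local times have
been added up. Let `D` be such an event, and let `B` be an event determined by the first `n` steps.
Then `P(D ∩ B) = P(D ∩ B')`, where `B'` is the event that `B` occurs for the walk started afresh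
after the first block; moreover `B'` is independent of `B` and has the same probability. Choosing
`B` close to `D` gives `P(D) = P(D)²`, as in the proof of the Hewitt–Savage zero-one law.

The walk returns to `0` infinitely often because it is a martingale with bounded increments that
never converges, which forces it to be unbounded above and below.
-/

namespace RandomWalk

open Filter Set Stream'
open scoped symmDiff Topology ENNReal NNReal

section ApproximateIndependence

variable {X : Type*} [MeasurableSpace X] {P : Measure X} [IsProbabilityMeasure P]

theorem measure_eq_zero_or_one_of_forall_approx {𝒜 : Set (Set X)} (h𝒜 : P.MeasureDense 𝒜)
    {D : Set X} (hD : MeasurableSet D)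
    (h : ∀ B ∈ 𝒜, ∃ B', MeasurableSet B' ∧
      P (D ∩ B') = P (D ∩ B) ∧ P (B ∩ B') = P B * P B) :
    P D = 0 ∨ P D = 1 := by
  suffices hsq : P.real D = P.real D * P.real D by
    have hsplit : P.real D = 0 ∨ P.real D = 1 := by grind
    simpa [measureReal_def, ENNReal.toReal_eq_one_iff, ENNReal.toReal_eq_zero_iff] using hsplit
  refine eq_of_forall_dist_le fun ε hε ↦ ?_
  obtain ⟨B, hB, hDB⟩ := h𝒜.approx D hD (measure_ne_top P D) (ε / 4) (by positivity)
  obtain ⟨B', hB', hD', hind⟩ := h B hB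
  have hBm := h𝒜.measurable B hB
  have hclose : P.real (D ∆ B) ≤ ε / 4 :=
    ENNReal.toReal_le_of_le_ofReal (by positivity) hDB.le
  have hinter {C : Set X} (hC : MeasurableSet C) :
      |P.real (D ∩ C) - P.real (B ∩ C)| ≤ ε / 4 := by
    refine (abs_measureReal_sub_le_measureReal_symmDiff (hD.inter hC).nullMeasurableSet
      (hBm.inter hC).nullMeasurableSet).trans (le_trans ?_ hclose)
    rw [← inter_symmDiff_distrib_right]
    exact measureReal_mono inter_subset_left
  have hB_D : |P.real B - P.real D| ≤ ε / 4 := by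
    simpa [abs_sub_comm] using hinter .univ
  have hD_DB : |P.real D - P.real (D ∩ B)| ≤ ε / 4 := by
    simpa [inter_comm B] using hinter hD
  have hDB_BB : |P.real (D ∩ B) - P.real B * P.real B| ≤ ε / 4 := by
    simpa [measureReal_def, hD', hind] using hinter hB'
  have hBB_DD : |P.real B * P.real B - P.real D * P.real D| ≤ 2 * (ε / 4) := by
    rw [mul_self_sub_mul_self, abs_mul, abs_of_nonneg (by positivity)]
    gcongr
    linarith [measureReal_le_one (μ := P) (s := B), measureReal_le_one (μ := P) (s := D)]
  calc dist (P.real D) (P.real D * P.real D)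
      ≤ |P.real D - P.real (D ∩ B)| + |P.real (D ∩ B) - P.real B * P.real B|
        + |P.real B * P.real B - P.real D * P.real D| := dist_triangle4 ..
    _ ≤ ε := by linarith

end ApproximateIndependence

section Streams

variable {α : Type*}

/-- Streams carry the product σ-algebra. -/
instance [MeasurableSpace α] : MeasurableSpace (Stream' α) := MeasurableSpace.pi

/-- The set of sequences that begin with the word `w`. -/
def prefixSet (w : List α) : Set (Stream' α) := {x | x.take w.length = w}

theorem append_mem_prefixSet (w : List α) (x : Stream' α) : w ++ₛ x ∈ prefixSet w := by
  simp [prefixSet, take_append_of_le_length]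

theorem append_drop_of_mem_prefixSet {w : List α} {x : Stream' α} (hx : x ∈ prefixSet w) :
    w ++ₛ x.drop w.length = x := by
  conv_rhs => rw [← append_take_drop w.length x, hx]

theorem prefixSet_inter_preimage_drop_append (w : List α) (E : Set (Stream' α)) :
    prefixSet w ∩ drop w.length ⁻¹' ((w ++ₛ ·) ⁻¹' E) = prefixSet w ∩ E := by
  ext x
  refine and_congr_right fun hx ↦ ?_
  simp [append_drop_of_mem_prefixSet hx]

theorem prefixSet_eq_iInter (w : List α) :
    prefixSet w = ⋂ i : Fin w.length, (fun x : Stream' α ↦ x.get i) ⁻¹' {w[i]} := by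
  ext x
  simp only [mem_iInter, mem_preimage, mem_singleton_iff]
  refine ⟨fun hx i ↦ ?_, fun h ↦ ?_⟩
  · conv_lhs => rw [← append_drop_of_mem_prefixSet hx]
    exact get_append_left ..
  · refine List.ext_getElem (by simp) fun i _ hi ↦ ?_
    rw [take_get]
    exact h ⟨i, hi⟩

/-- The values at `ω` of a sequence of random variables, as a stream. -/
def toStream {Ω : Type*} (ξ : ℕ → Ω → α) (ω : Ω) : Stream' α := fun i ↦ ξ i ω

@[simp]
theorem get_toStream {Ω : Type*} (ξ : ℕ → Ω → α) (ω : Ω) (i : ℕ) :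
    (toStream ξ ω).get i = ξ i ω := rfl

variable [MeasurableSpace α]

theorem measurable_get (i : ℕ) : Measurable fun x : Stream' α ↦ x.get i :=
  measurable_pi_apply i

theorem measurable_drop (n : ℕ) : Measurable (drop n : Stream' α → Stream' α) :=
  measurable_pi_lambda _ fun i ↦ measurable_get (i + n)

theorem measurable_append (w : List α) : Measurable fun x : Stream' α ↦ w ++ₛ x := by
  induction w with
  | nil => exact measurable_id
  | cons a w ih =>
    refine measurable_pi_lambda _ fun i ↦ ?_
    cases i with
    | zero => exact measurable_const
    | succ i => exact (measurable_get i).comp ih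

theorem measurableSet_prefixSet [MeasurableSingletonClass α] (w : List α) :
    MeasurableSet (prefixSet w) := by
  rw [prefixSet_eq_iInter]
  exact .iInter fun i ↦ measurable_get i (measurableSet_singleton _)

theorem measurableSet_take_preimage [Countable α] [MeasurableSingletonClass α] (n : ℕ)
    (s : Set (List α)) : MeasurableSet ((fun x : Stream' α ↦ x.take n) ⁻¹' s) := by
  have hunion : (fun x : Stream' α ↦ x.take n) ⁻¹' s =
      ⋃ w ∈ {w ∈ s | w.length = n}, prefixSet w := by
    ext x
    simp only [mem_preimage, mem_iUnion₂, prefixSet, mem_ofPred_eq, exists_prop]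
    constructor
    · exact fun hx ↦ ⟨x.take n, ⟨hx, length_take ..⟩, by simp⟩
    · rintro ⟨w, ⟨hw, rfl⟩, hx⟩
      rwa [hx]
  rw [hunion]
  exact .biUnion (to_countable _) fun w _ ↦ measurableSet_prefixSet w

theorem exists_eq_take_preimage_of_mem_measurableCylinders {B : Set (Stream' α)}
    (hB : B ∈ measurableCylinders fun _ : ℕ ↦ α) :
    ∃ (n : ℕ) (s : Set (List α)), B = (fun x : Stream' α ↦ x.take n) ⁻¹' s := by
  obtain ⟨I, T, -, rfl⟩ := (mem_measurableCylinders B).1 hB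
  obtain ⟨n, hn⟩ := I.exists_nat_subset_range
  refine ⟨n, take n '' cylinder I T, ?_⟩
  refine Set.ext fun (x : Stream' α) ↦ ⟨mem_image_of_mem _, fun ⟨y, hy, hyx⟩ ↦ ?_⟩
  suffices hagree : I.restrict x = I.restrict y from (congr_arg (· ∈ T) hagree).mpr hy
  funext i
  have hi : (i : ℕ) < n := Finset.mem_range.1 (hn i.2)
  have hget : (y.take n)[(i : ℕ)]? = (x.take n)[(i : ℕ)]? := congr_arg (·[(i : ℕ)]?) hyx
  simp only [getElem?_take hi] at hget
  exact (Option.some_injective _ hget).symm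

/-- The law of an i.i.d. sequence whose terms have law `ν`, as a measure on streams. -/
noncomputable def iidLaw (ν : Measure α) : Measure (Stream' α) :=
  Measure.infinitePi fun _ : ℕ ↦ ν

variable {ν : Measure α} [IsProbabilityMeasure ν]

instance : IsProbabilityMeasure (iidLaw ν) :=
  inferInstanceAs (IsProbabilityMeasure (Measure.infinitePi fun _ : ℕ ↦ ν))

theorem measureDense_measurableCylinders :
    (iidLaw ν).MeasureDense (measurableCylinders fun _ : ℕ ↦ α) :=
  .of_generateFrom_isSetAlgebra_finite _ isSetAlgebra_measurableCylinders
    generateFrom_measurableCylinders.symm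

theorem measurePreserving_drop (n : ℕ) : MeasurePreserving (drop n) (iidLaw ν) (iidLaw ν) :=
  ⟨measurable_drop n, Measure.map_infinitePi_infinitePi_of_inj (add_left_injective n)⟩

theorem measure_prefixSet_inter [MeasurableSingletonClass α] (w : List α)
    {E : Set (Stream' α)} (hE : MeasurableSet E) :
    iidLaw ν (prefixSet w ∩ E) = iidLaw ν (prefixSet w) * iidLaw ν ((w ++ₛ ·) ⁻¹' E) := by
  let coord (i : ℕ) : MeasurableSpace (Stream' α) := .comap (fun x ↦ x.get i) inferInstance
  have hcoord (i : ℕ) (I : Set ℕ) (hi : i ∈ I) :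
      Measurable[⨆ j ∈ I, coord j] fun x : Stream' α ↦ x.get i :=
    Measurable.mono (comap_measurable _) (le_iSup₂_of_le i hi le_rfl) le_rfl
  have hindep : Indep (⨆ i ∈ Iio w.length, coord i) (⨆ i ∈ Ici w.length, coord i) (iidLaw ν) :=
    indep_iSup_of_disjoint (fun i ↦ (measurable_get i).comap_le)
      (iIndepFun_infinitePi (X := fun _ a ↦ a) fun _ ↦ measurable_id)
      (Iio_disjoint_Ici le_rfl)
  have hpast : MeasurableSet[⨆ i ∈ Iio w.length, coord i] (prefixSet w) := by
    rw [prefixSet_eq_iInter]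
    exact .iInter fun i ↦ hcoord i _ i.2 (measurableSet_singleton _)
  have hfuture :
      Measurable[⨆ i ∈ Ici w.length, coord i, _] (drop w.length : Stream' α → Stream' α) :=
    @measurable_pi_lambda _ _ _ (_) _ _ fun i ↦ hcoord (i + w.length) _ (Nat.le_add_left ..)
  have hE' := measurable_append w hE
  rw [← prefixSet_inter_preimage_drop_append,
    Indep_iff _ _ _ |>.1 hindep _ _ hpast (hfuture hE'),
    (measurePreserving_drop _).measure_preimage hE'.nullMeasurableSet]

theorem hasLaw_iidLaw {Ω : Type*} [MeasurableSpace Ω] {μ : Measure Ω} {ξ : ℕ → Ω → α}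
    (hindep : iIndepFun ξ μ) (hident : ∀ i, IdentDistrib (ξ i) (ξ 0) μ μ) :
    HasLaw (toStream ξ) (iidLaw (μ.map (ξ 0))) μ where
  aemeasurable := aemeasurable_pi_iff.2 fun i ↦ (hident i).aemeasurable_fst
  map_eq := by
    have := hindep.isProbabilityMeasure
    rw [iidLaw, ← funext fun i ↦ (hident i).map_eq]
    exact hindep.map_fun_eq_infinitePi_map₀' fun i ↦ (hident i).aemeasurable_fst

end Streams

section InfinitelyOften

variable {α : Type*}

/-- The event that infinitely many prefixes of the sequence belong to `𝓢`. -/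
def infinitelyOften (𝓢 : Set (List α)) : Set (Stream' α) := {x | ∃ᶠ t in atTop, x.take t ∈ 𝓢}

theorem append_mem_infinitelyOften {𝓢 : Set (List α)} (w : List α) (x : Stream' α) :
    w ++ₛ x ∈ infinitelyOften 𝓢 ↔ x ∈ infinitelyOften {v | w ++ v ∈ 𝓢} := by
  simp only [infinitelyOften, mem_ofPred_eq, append_take, add_comm w.length]
  rw [← frequently_map (m := (· + w.length)) (P := fun t ↦ (w ++ₛ x).take t ∈ 𝓢),
    map_add_atTop_eq_nat]

theorem measurableSet_infinitelyOften [Countable α] [MeasurableSpace α]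
    [MeasurableSingletonClass α] (𝓢 : Set (List α)) : MeasurableSet (infinitelyOften 𝓢) := by
  have hlimsup : infinitelyOften 𝓢 = limsup (fun t ↦ (fun x ↦ x.take t) ⁻¹' 𝓢) atTop := by
    ext x
    simp [infinitelyOften, mem_limsup_iff_frequently_mem]
  rw [hlimsup]
  exact .measurableSet_limsup fun t ↦ measurableSet_take_preimage t 𝓢

end InfinitelyOften

section Blocks

variable {α : Type*} {𝓛 : Set (List α)} {n : ℕ}

/-- Read a sequence from the left and stop at the first prefix of length at least `n` that belongs
to `𝓛`: the set of words at which this procedure can stop. -/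
def firstBlocks (𝓛 : Set (List α)) (n : ℕ) : Set (List α) :=
  {w ∈ 𝓛 | n ≤ w.length ∧ ∀ m, n ≤ m → m < w.length → w.take m ∉ 𝓛}

theorem exists_mem_firstBlocks {x : Stream' α} (hx : x ∈ infinitelyOften 𝓛) (n : ℕ) :
    ∃ w ∈ firstBlocks 𝓛 n, x ∈ prefixSet w := by
  classical
  have hex : ∃ m, n ≤ m ∧ x.take m ∈ 𝓛 := frequently_atTop.1 hx n
  obtain ⟨hn, hmem⟩ := Nat.find_spec hex
  refine ⟨x.take (Nat.find hex), ⟨hmem, by simpa using hn, fun m hnm hm hcut ↦ ?_⟩,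
    by simp [prefixSet]⟩
  rw [length_take] at hm
  rw [take_take, min_eq_right hm.le] at hcut
  exact Nat.find_min hex hm ⟨hnm, hcut⟩

theorem pairwiseDisjoint_prefixSet_firstBlocks :
    (firstBlocks 𝓛 n).PairwiseDisjoint prefixSet := by
  have hlt {u v : List α} (hu : u ∈ firstBlocks 𝓛 n) (hv : v ∈ firstBlocks 𝓛 n) {x : Stream' α}
      (hxu : x ∈ prefixSet u) (hxv : x ∈ prefixSet v) : ¬ u.length < v.length := fun h ↦ by
    refine hv.2.2 _ hu.2.1 h ?_
    rw [← hxv, take_take, min_eq_right h.le, hxu]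
    exact hu.1
  refine fun u hu v hv huv ↦ Set.disjoint_left.2 fun x hxu hxv ↦ huv ?_
  have hlen : u.length = v.length :=
    le_antisymm (not_lt.1 (hlt hv hu hxv hxu)) (not_lt.1 (hlt hu hv hxu hxv))
  rw [← hxu, ← hxv, hlen]

/-- The event that `B` occurs for what remains of the sequence once its first block is removed. -/
def afterFirstBlock (𝓛 : Set (List α)) (n : ℕ) (B : Set (Stream' α)) : Set (Stream' α) :=
  ⋃ w ∈ firstBlocks 𝓛 n, prefixSet w ∩ drop w.length ⁻¹' B

theorem append_preimage_afterFirstBlock {u : List α} (hu : u ∈ firstBlocks 𝓛 n)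
    (B : Set (Stream' α)) : (u ++ₛ ·) ⁻¹' afterFirstBlock 𝓛 n B = B := by
  ext x
  simp only [afterFirstBlock, mem_preimage, mem_iUnion₂, mem_inter_iff, exists_prop]
  constructor
  · rintro ⟨w, hw, hprefix, hdrop⟩
    obtain rfl : w = u := pairwiseDisjoint_prefixSet_firstBlocks.elim_set hw hu _ hprefix
      (append_mem_prefixSet u x)
    rwa [drop_append_stream] at hdrop
  · exact fun hx ↦ ⟨u, hu, append_mem_prefixSet u x, by rwa [drop_append_stream]⟩

theorem append_preimage_take_preimage {w : List α} (hn : n ≤ w.length) (s : Set (List α)) :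
    (w ++ₛ ·) ⁻¹' ((fun x : Stream' α ↦ x.take n) ⁻¹' s) = {_x | w.take n ∈ s} := by
  ext x
  simp [take_append_of_le_length _ _ _ hn]

variable [Countable α] [MeasurableSpace α] [MeasurableSingletonClass α]

theorem measurableSet_afterFirstBlock {B : Set (Stream' α)} (hB : MeasurableSet B) :
    MeasurableSet (afterFirstBlock 𝓛 n B) :=
  .biUnion (to_countable _) fun w _ ↦ (measurableSet_prefixSet w).inter (measurable_drop _ hB)

variable {ν : Measure α} [IsProbabilityMeasure ν]

theorem measure_eq_tsum_firstBlocks (h𝓛 : ∀ᵐ x ∂iidLaw ν, x ∈ infinitelyOften 𝓛)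
    (n : ℕ) {E : Set (Stream' α)} (hE : MeasurableSet E) :
    iidLaw ν E =
      ∑' w : firstBlocks 𝓛 n, iidLaw ν (prefixSet w) * iidLaw ν ((w.1 ++ₛ ·) ⁻¹' E) := by
  have hcover : E =ᵐ[iidLaw ν] ⋃ w : firstBlocks 𝓛 n, prefixSet w.1 ∩ E := by
    filter_upwards [h𝓛] with x hx
    obtain ⟨w, hw, hxw⟩ := exists_mem_firstBlocks hx n
    exact propext ⟨fun hxE ↦ mem_iUnion.2 ⟨⟨w, hw⟩, hxw, hxE⟩,
      fun hxE ↦ (mem_iUnion.1 hxE).choose_spec.2⟩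
  have hdisj : Pairwise (Function.onFun Disjoint fun w : firstBlocks 𝓛 n ↦ prefixSet w.1 ∩ E) :=
    fun u v huv ↦ (pairwiseDisjoint_prefixSet_firstBlocks u.2 v.2 (Subtype.coe_ne_coe.2 huv)).mono
      inter_subset_left inter_subset_left
  rw [measure_congr hcover, measure_iUnion hdisj fun w ↦ (measurableSet_prefixSet w.1).inter hE]
  exact tsum_congr fun w ↦ measure_prefixSet_inter w.1 hE

theorem measure_inter_afterFirstBlock (h𝓛 : ∀ᵐ x ∂iidLaw ν, x ∈ infinitelyOften 𝓛)
    (n : ℕ) {D B : Set (Stream' α)} (hD : MeasurableSet D) (hB : MeasurableSet B) :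
    iidLaw ν (D ∩ afterFirstBlock 𝓛 n B) =
      ∑' w : firstBlocks 𝓛 n, iidLaw ν (prefixSet w) * iidLaw ν ((w.1 ++ₛ ·) ⁻¹' D ∩ B) := by
  rw [measure_eq_tsum_firstBlocks h𝓛 n (hD.inter (measurableSet_afterFirstBlock hB))]
  refine tsum_congr fun w ↦ ?_
  rw [preimage_inter, append_preimage_afterFirstBlock w.2]

theorem measure_take_preimage_inter_afterFirstBlock
    (h𝓛 : ∀ᵐ x ∂iidLaw ν, x ∈ infinitelyOften 𝓛) (s : Set (List α))
    {B : Set (Stream' α)} (hB : MeasurableSet B) :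
    iidLaw ν ((fun x ↦ x.take n) ⁻¹' s ∩ afterFirstBlock 𝓛 n B) =
      iidLaw ν ((fun x ↦ x.take n) ⁻¹' s) * iidLaw ν B := by
  have hs := measurableSet_take_preimage n s
  rw [measure_inter_afterFirstBlock h𝓛 n hs hB, measure_eq_tsum_firstBlocks h𝓛 n hs,
    ← ENNReal.tsum_mul_right]
  refine tsum_congr fun w ↦ ?_
  rw [append_preimage_take_preimage w.2.2.1]
  by_cases hw : w.1.take n ∈ s <;> simp [hw]

theorem measure_inter_afterFirstBlock_take_preimage
    (h𝓛 : ∀ᵐ x ∂iidLaw ν, x ∈ infinitelyOften 𝓛)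
    {D : Set (Stream' α)} (hD : MeasurableSet D)
    (hswap : ∀ u ∈ 𝓛, ∀ v ∈ 𝓛, ∀ x, u ++ₛ (v ++ₛ x) ∈ D ↔ v ++ₛ (u ++ₛ x) ∈ D)
    (s : Set (List α)) :
    iidLaw ν (D ∩ afterFirstBlock 𝓛 n ((fun x ↦ x.take n) ⁻¹' s)) =
      iidLaw ν (D ∩ (fun x ↦ x.take n) ⁻¹' s) := by
  set B := (fun x : Stream' α ↦ x.take n) ⁻¹' s
  have hB : MeasurableSet B := measurableSet_take_preimage n s
  have hDw (w : List α) : MeasurableSet ((w ++ₛ ·) ⁻¹' D) := measurable_append w hD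
  let p (w : firstBlocks 𝓛 n) := iidLaw ν (prefixSet w.1)
  -- Exchange the first two blocks `u` and `v`: only the one in front is seen by `B`.
  have hterm (u v : firstBlocks 𝓛 n) :
      (v.1 ++ₛ ·) ⁻¹' ((u.1 ++ₛ ·) ⁻¹' D ∩ B) = (u.1 ++ₛ ·) ⁻¹' ((v.1 ++ₛ ·) ⁻¹' (D ∩ B)) := by
    ext x
    simp only [B, mem_preimage, mem_inter_iff, take_append_of_le_length _ _ _ v.2.2.1,
      hswap u.1 u.2.1 v.1 v.2.1]
  calc iidLaw ν (D ∩ afterFirstBlock 𝓛 n B)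
      = ∑' u, p u * iidLaw ν ((u.1 ++ₛ ·) ⁻¹' D ∩ B) := measure_inter_afterFirstBlock h𝓛 n hD hB
    _ = ∑' u, ∑' v, p u * (p v * iidLaw ν ((v.1 ++ₛ ·) ⁻¹' ((u.1 ++ₛ ·) ⁻¹' D ∩ B))) := by
        refine tsum_congr fun u ↦ ?_
        rw [measure_eq_tsum_firstBlocks h𝓛 n ((hDw u).inter hB), ENNReal.tsum_mul_left]
    _ = ∑' v, ∑' u, p v * (p u * iidLaw ν ((u.1 ++ₛ ·) ⁻¹' ((v.1 ++ₛ ·) ⁻¹' (D ∩ B)))) := by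
        rw [ENNReal.tsum_comm]
        simp only [hterm, mul_left_comm]
    _ = ∑' v, p v * iidLaw ν ((v.1 ++ₛ ·) ⁻¹' (D ∩ B)) := by
        refine tsum_congr fun v ↦ ?_
        rw [ENNReal.tsum_mul_left,
          ← measure_eq_tsum_firstBlocks h𝓛 n (measurable_append v.1 (hD.inter hB))]
    _ = iidLaw ν (D ∩ B) := (measure_eq_tsum_firstBlocks h𝓛 n (hD.inter hB)).symm

theorem iidLaw_eq_zero_or_one_of_swap_invariant
    (h𝓛 : ∀ᵐ x ∂iidLaw ν, x ∈ infinitelyOften 𝓛)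
    {D : Set (Stream' α)} (hD : MeasurableSet D)
    (hswap : ∀ u ∈ 𝓛, ∀ v ∈ 𝓛, ∀ x, u ++ₛ (v ++ₛ x) ∈ D ↔ v ++ₛ (u ++ₛ x) ∈ D) :
    iidLaw ν D = 0 ∨ iidLaw ν D = 1 := by
  refine measure_eq_zero_or_one_of_forall_approx measureDense_measurableCylinders hD fun B hB ↦ ?_
  obtain ⟨n, s, rfl⟩ := exists_eq_take_preimage_of_mem_measurableCylinders hB
  have hs := measurableSet_take_preimage n s
  exact ⟨afterFirstBlock 𝓛 n _, measurableSet_afterFirstBlock hs,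
    measure_inter_afterFirstBlock_take_preimage h𝓛 hD hswap s,
    measure_take_preimage_inter_afterFirstBlock h𝓛 s hs⟩

end Blocks

section LocalTime

variable {G : Type*}

theorem sum_take_eq_sum_range [AddCommMonoid G] (x : Stream' G) (t : ℕ) :
    (x.take t).sum = ∑ i ∈ Finset.range t, x.get i := by
  induction t with
  | zero => simp
  | succ t ih => rw [take_succ', List.sum_append, ih, Finset.sum_range_succ, List.sum_singleton]

variable [DecidableEq G]

/-- `localTime S t y` counts the visits of the path `S` to `y` at the times `1, …, t`; the starting
point `S 0` does not count. -/
def localTime (S : ℕ → G) (t : ℕ) (y : G) : ℕ := {k ∈ Finset.Icc 1 t | S k = y}.card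

theorem localTime_succ (S : ℕ → G) (t : ℕ) (y : G) :
    localTime S (t + 1) y = localTime S t y + if S (t + 1) = y then 1 else 0 := by
  simp only [localTime, Finset.card_filter]
  exact Finset.sum_Icc_succ_top (by simp) _

theorem localTime_add (S : ℕ → G) (m t : ℕ) :
    localTime S (m + t) = localTime S m + localTime (fun k ↦ S (m + k)) t := by
  ext y
  induction t with
  | zero => simp [localTime]
  | succ t ih => simp only [← add_assoc, localTime_succ, ih, Pi.add_apply]

theorem localTime_congr {S T : ℕ → G} {t : ℕ} (h : ∀ k ≤ t, S k = T k) :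
    localTime S t = localTime T t := by
  ext y
  simp only [localTime]
  congr 1
  exact Finset.filter_congr fun k hk ↦ by rw [h k (Finset.mem_Icc.1 hk).2]

/-- The local times of the path whose successive steps are the letters of `w`. -/
def wordLocalTime [AddMonoid G] (w : List G) : G → ℕ :=
  localTime (fun k ↦ (w.take k).sum) w.length

theorem wordLocalTime_append_of_sum_eq_zero [AddMonoid G] {u : List G} (hu : u.sum = 0)
    (w : List G) : wordLocalTime (u ++ w) = wordLocalTime u + wordLocalTime w := by
  have hpast : localTime (fun k ↦ ((u ++ w).take k).sum) u.length = wordLocalTime u :=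
    localTime_congr fun k hk ↦ by rw [List.take_append_of_le_length hk]
  have hfuture (k : ℕ) : ((u ++ w).take (u.length + k)).sum = (w.take k).sum := by
    rw [List.take_length_add_append, List.sum_append, hu, zero_add]
  rw [wordLocalTime, List.length_append, localTime_add, hpast]
  simp only [hfuture, wordLocalTime]

theorem wordLocalTime_take [AddCommMonoid G] (x : Stream' G) (t : ℕ) :
    wordLocalTime (x.take t) = localTime (fun k ↦ ∑ i ∈ Finset.range k, x.get i) t := by
  rw [wordLocalTime, length_take]
  exact localTime_congr fun k hk ↦ by
    rw [take_take, min_eq_right hk, sum_take_eq_sum_range]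

end LocalTime

section ZeroOne

variable {G : Type*} [AddMonoid G] [DecidableEq G] [Countable G] [MeasurableSpace G]
  [MeasurableSingletonClass G]

theorem iidLaw_infinitelyOften_wordLocalTime_eq_zero_or_one {ν : Measure G} [IsProbabilityMeasure ν]
    (hν : ∀ᵐ x ∂iidLaw ν, x ∈ infinitelyOften {w | w.sum = 0}) (R : G → (G → ℕ) → Prop) :
    iidLaw ν (infinitelyOften {w | R w.sum (wordLocalTime w)}) = 0 ∨
      iidLaw ν (infinitelyOften {w | R w.sum (wordLocalTime w)}) = 1 := by
  refine iidLaw_eq_zero_or_one_of_swap_invariant hν (measurableSet_infinitelyOften _)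
    fun u (hu : u.sum = 0) v (hv : v.sum = 0) x ↦ ?_
  simp only [append_mem_infinitelyOften, mem_ofPred_eq, List.sum_append,
    wordLocalTime_append_of_sum_eq_zero hu, wordLocalTime_append_of_sum_eq_zero hv, hu, hv,
    zero_add, add_left_comm]

end ZeroOne

section Recurrence

theorem frequently_eq_of_not_bddAbove_of_not_bddBelow {s : ℕ → ℤ}
    (hs : ∀ n, |s (n + 1) - s n| ≤ 1) (habove : ¬ BddAbove (range s))
    (hbelow : ¬ BddBelow (range s)) (k : ℤ) : ∃ᶠ n in atTop, s n = k := by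
  intro hne
  obtain ⟨N, hN⟩ := eventually_atTop.1 hne
  rcases lt_or_gt_of_ne (hN N le_rfl) with hlt | hgt
  · refine habove (IsBoundedUnder.bddAbove_range
      (isBoundedUnder_of_eventually_le (a := k) (eventually_atTop.2 ⟨N, fun n hn ↦ ?_⟩)))
    induction n, hn using Nat.le_induction with
    | base => exact hlt.le
    | succ n hn ih => grind
  · refine hbelow (IsBoundedUnder.bddBelow_range
      (isBoundedUnder_of_eventually_ge (a := k) (eventually_atTop.2 ⟨N, fun n hn ↦ ?_⟩)))
    induction n, hn using Nat.le_induction with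
    | base => exact hgt.le
    | succ n hn ih => grind

theorem not_tendsto_of_abs_sub_eq_one {s : ℕ → ℝ} (hs : ∀ n, |s (n + 1) - s n| = 1) (c : ℝ) :
    ¬ Tendsto s atTop (𝓝 c) := fun hc ↦ by
  have hdiff : Tendsto (fun n ↦ |s (n + 1) - s n|) atTop (𝓝 |c - c|) :=
    ((hc.comp (tendsto_add_atTop_nat 1)).sub hc).abs
  simp only [hs, sub_self, abs_zero] at hdiff
  exact one_ne_zero (tendsto_nhds_unique tendsto_const_nhds hdiff)

variable {Ω : Type*} {mΩ : MeasurableSpace Ω} {μ : Measure Ω}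

theorem ae_frequently_eq_of_martingale [IsFiniteMeasure μ] {ℱ : Filtration ℕ mΩ} {f : ℕ → Ω → ℤ}
    (hf : Martingale (fun n ω ↦ (f n ω : ℝ)) ℱ μ)
    (hstep : ∀ᵐ ω ∂μ, ∀ n, |f (n + 1) ω - f n ω| = 1) (k : ℤ) :
    ∀ᵐ ω ∂μ, ∃ᶠ n in atTop, f n ω = k := by
  have hstep' : ∀ᵐ ω ∂μ, ∀ n, |(f (n + 1) ω : ℝ) - f n ω| = 1 :=
    hstep.mono fun ω hω n ↦ mod_cast hω n
  have hbdd : ∀ᵐ ω ∂μ, ∀ n, |(f (n + 1) ω : ℝ) - f n ω| ≤ (1 : ℝ≥0) :=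
    hstep'.mono fun ω hω n ↦ (hω n).le
  filter_upwards [hstep, hstep', hf.submartingale.bddAbove_iff_exists_tendsto hbdd,
    hf.bddAbove_range_iff_bddBelow_range hbdd] with ω hω hω' hconv hsymm
  have habove : ¬ BddAbove (range fun n ↦ (f n ω : ℝ)) := fun h ↦
    (hconv.1 h).elim (not_tendsto_of_abs_sub_eq_one hω')
  refine frequently_eq_of_not_bddAbove_of_not_bddBelow (fun n ↦ (hω n).le) (fun h ↦ habove ?_)
    (fun h ↦ habove (hsymm.2 ?_)) k
  · simpa only [← range_comp, Function.comp_def] using Int.cast_mono.map_bddAbove h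
  · simpa only [← range_comp, Function.comp_def] using Int.cast_mono.map_bddBelow h

theorem martingale_sum_range_succ {X : ℕ → Ω → ℝ} (hX : ∀ i, StronglyMeasurable (X i))
    (hindep : iIndepFun X μ) (hint : ∀ i, Integrable (X i) μ) (hmean : ∀ i, μ[X i] = 0) :
    Martingale (fun n ω ↦ ∑ i ∈ Finset.range (n + 1), X i ω) (Filtration.natural X hX) μ := by
  have := hindep.isProbabilityMeasure
  refine martingale_of_condExp_sub_eq_zero_nat (fun n ↦ ?_)
    (fun n ↦ integrable_finsetSum _ fun i _ ↦ hint i) fun n ↦ ?_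
  · refine Finset.stronglyMeasurable_fun_sum _ fun i hi ↦ ?_
    exact (Filtration.stronglyAdapted_natural hX).stronglyMeasurable_le
      (Finset.mem_range_succ_iff.1 hi)
  · have hincrement : ((fun ω ↦ ∑ i ∈ Finset.range (n + 1 + 1), X i ω) -
        fun ω ↦ ∑ i ∈ Finset.range (n + 1), X i ω) = X (n + 1) := by
      ext ω
      simp [Finset.sum_range_succ _ (n + 1)]
    rw [hincrement]
    filter_upwards [hindep.condExp_natural_ae_eq_of_lt hX n.lt_succ_self] with ω hω
    rw [hω, hmean, Pi.zero_apply]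

theorem ae_frequently_sum_range_eq_of_abs_eq_one {ξ : ℕ → Ω → ℤ} (hξ : ∀ i, Measurable (ξ i))
    (hindep : iIndepFun ξ μ) (habs : ∀ i, ∀ᵐ ω ∂μ, |ξ i ω| = 1)
    (hmean : ∀ i, ∫ ω, (ξ i ω : ℝ) ∂μ = 0) (k : ℤ) :
    ∀ᵐ ω ∂μ, ∃ᶠ t in atTop, ∑ i ∈ Finset.range t, ξ i ω = k := by
  have := hindep.isProbabilityMeasure
  have hcast : Measurable ((↑) : ℤ → ℝ) := measurable_from_top
  have hmart := martingale_sum_range_succ (fun i ↦ (hcast.comp (hξ i)).stronglyMeasurable)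
    (hindep.comp _ fun _ ↦ hcast)
    (fun i ↦ .of_bound (hcast.comp (hξ i)).aestronglyMeasurable 1 <|
      (habs i).mono fun ω hω ↦ by simp [← Int.cast_abs, hω]) hmean
  simp only [Function.comp_apply, ← Int.cast_sum] at hmart
  have hstep : ∀ᵐ ω ∂μ, ∀ n, |∑ i ∈ Finset.range (n + 1 + 1), ξ i ω -
      ∑ i ∈ Finset.range (n + 1), ξ i ω| = 1 := by
    filter_upwards [ae_all_iff.2 habs] with ω hω n
    rw [Finset.sum_range_succ _ (n + 1), add_sub_cancel_left, hω]
  filter_upwards [ae_frequently_eq_of_martingale hmart hstep k] with ω hω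
  exact (tendsto_add_atTop_nat 1).frequently hω

end Recurrence

section FairSign

theorem eq_bernoulliMeasure_of_apply_singleton {X : Type*} [MeasurableSpace X]
    [MeasurableSingletonClass X] {ν : Measure X} [IsProbabilityMeasure ν] {x y : X}
    {p : unitInterval} (hxy : x ≠ y) (hx : ν {x} = unitInterval.toNNReal p)
    (hy : ν {y} = unitInterval.toNNReal (unitInterval.symm p)) : ν = Ber(x, y, p) := by
  refine (Measure.eq_of_le_of_isProbabilityMeasure ?_).symm
  calc Ber(x, y, p) = ν.restrict ({x} ∪ {y}) := by
        rw [Measure.restrict_union (disjoint_singleton.2 hxy) (measurableSet_singleton y),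
          Measure.restrict_singleton, Measure.restrict_singleton, hx, hy]
        rfl
    _ ≤ ν := Measure.restrict_le_self

/-- The uniform distribution on `{1, -1}`, the step distribution of simple random walk on `ℤ`. -/
noncomputable def fairSign : Measure ℤ := Ber(1, -1, ⟨1 / 2, by norm_num, by norm_num⟩)

theorem ae_abs_eq_one_fairSign : ∀ᵐ a ∂fairSign, |a| = 1 := by
  simp only [fairSign, bernoulliMeasure_def, ae_add_measure_iff]
  exact ⟨Measure.ae_smul_measure (by simp [ae_dirac_eq]) _,
    Measure.ae_smul_measure (by simp [ae_dirac_eq]) _⟩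

theorem integral_id_fairSign : ∫ a : ℤ, (a : ℝ) ∂fairSign = 0 := by
  rw [fairSign, integral_bernoulliMeasure]
  norm_num

variable {Ω : Type*} [MeasurableSpace Ω] {μ : Measure Ω}

theorem hasLaw_fairSign [IsProbabilityMeasure μ] {ξ : Ω → ℤ} (hξ : Measurable ξ)
    (h1 : μ {ω | ξ ω = 1} = 1 / 2) (hneg1 : μ {ω | ξ ω = -1} = 1 / 2) :
    HasLaw ξ fairSign μ := by
  have := Measure.isProbabilityMeasure_map (μ := μ) hξ.aemeasurable
  have hhalf : ((1 / 2 : ℝ≥0) : ℝ≥0∞) = 1 / 2 := by simp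
  refine ⟨hξ.aemeasurable, eq_bernoulliMeasure_of_apply_singleton (by decide) ?_ ?_⟩ <;>
    rw [Measure.map_apply hξ (measurableSet_singleton _)]
  · exact h1.trans (hhalf.symm.trans (congr_arg _ (NNReal.eq (by simp))))
  · exact hneg1.trans (hhalf.symm.trans (congr_arg _ (NNReal.eq (by norm_num))))

theorem ae_frequently_sum_range_eq_of_hasLaw_fairSign {ξ : ℕ → Ω → ℤ} (hξ : ∀ i, Measurable (ξ i))
    (hindep : iIndepFun ξ μ) (hlaw : ∀ i, HasLaw (ξ i) fairSign μ) (k : ℤ) :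
    ∀ᵐ ω ∂μ, ∃ᶠ t in atTop, ∑ i ∈ Finset.range t, ξ i ω = k :=
  ae_frequently_sum_range_eq_of_abs_eq_one hξ hindep
    (fun i ↦ ((hlaw i).ae_iff (measurable_of_countable _)).2 ae_abs_eq_one_fairSign)
    (fun i ↦ ((hlaw i).integral_comp (f := ((↑) : ℤ → ℝ))
      measurable_from_top.aestronglyMeasurable).trans integral_id_fairSign) k

end FairSign

section FavoriteSites

/-- The favorite sites of local times `ℓ`: those where `ℓ` attains its maximum. -/
def favoriteSites {G : Type*} (ℓ : G → ℕ) : Set G := {y | ∀ z, ℓ z ≤ ℓ y}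

theorem encard_one_le_and_eq_top_iff {p : ℕ → Prop} :
    {t | 1 ≤ t ∧ p t}.encard = ⊤ ↔ ∃ᶠ t in atTop, p t := by
  rw [encard_eq_top_iff, ← Nat.frequently_atTop_iff_infinite]
  exact ⟨fun h ↦ h.mono fun _ ↦ And.right, fun h ↦ ((eventually_ge_atTop 1).and_frequently h)⟩

end FavoriteSites

end RandomWalk

open RandomWalk

theorem f_three_eq_top_zero_one_law_general {Ω G : Type*} [MeasurableSpace Ω] {μ : Measure Ω}
    [AddCommMonoid G] [DecidableEq G] [Countable G] [MeasurableSpace G]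
    [MeasurableSingletonClass G] {ξ : ℕ → Ω → G} (hindep : iIndepFun ξ μ)
    (hident : ∀ i, IdentDistrib (ξ i) (ξ 0) μ μ)
    (hrec : ∀ᵐ ω ∂μ, ∃ᶠ t in Filter.atTop, ∑ i ∈ Finset.range t, ξ i ω = 0)
    (R : G → (G → ℕ) → Prop) :
    let S (ω : Ω) (t : ℕ) : G := ∑ i ∈ Finset.range t, ξ i ω
    μ {ω | ∃ᶠ t in Filter.atTop, R (S ω t) (localTime (S ω) t)} = 0 ∨
      μ {ω | ∃ᶠ t in Filter.atTop, R (S ω t) (localTime (S ω) t)} = 1 := by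
  intro S
  have := hindep.isProbabilityMeasure
  have := Measure.isProbabilityMeasure_map (hident 0).aemeasurable_fst
  have hX := hasLaw_iidLaw hindep hident
  have hreturn : ∀ᵐ x ∂iidLaw (μ.map (ξ 0)), x ∈ infinitelyOften {w : List G | w.sum = 0} :=
    (hX.ae_iff (measurableSet_infinitelyOften _).mem).1 <| by
      simpa [infinitelyOften, sum_take_eq_sum_range] using hrec
  have hevent : {ω | ∃ᶠ t in Filter.atTop, R (S ω t) (localTime (S ω) t)} =
      {ω | toStream ξ ω ∈ infinitelyOften {w | R w.sum (wordLocalTime w)}} := by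
    simp [S, infinitelyOften, sum_take_eq_sum_range, wordLocalTime_take]
  rw [hevent, hX.measure_eq (p := (· ∈ infinitelyOften _)) (measurableSet_infinitelyOften _)]
  exact iidLaw_infinitelyOften_wordLocalTime_eq_zero_or_one hreturn R

/-- A zero-one law: the probability that `f(3) = ∞` is either 0 or 1. -/
theorem f_three_eq_top_zero_one_law
    {Ω : Type*} [MeasurableSpace Ω] (μ : Measure Ω) [IsProbabilityMeasure μ]
    -- i.i.d. steps, each uniform on {−1, 1}
    (ξ : ℕ → Ω → ℤ) (hξmeas : ∀ i, Measurable (ξ i))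
    (hξindep : iIndepFun ξ μ)
    (hξ1 : ∀ i, μ {ω | ξ i ω = 1} = 1 / 2)
    (hξ2 : ∀ i, μ {ω | ξ i ω = -1} = 1 / 2)
    -- the simple random walk
    (S : ℕ → Ω → ℤ) (hS : ∀ t ω, S t ω = ∑ i ∈ Finset.range t, ξ i ω)
    -- local times
    (L : ℕ → ℤ → Ω → ℕ)
    (hL : ∀ t x ω, L t x ω = ((Finset.Icc 1 t).filter fun k => S k ω = x).card)
    -- favorite (most visited) sites
    (Fav : ℕ → Ω → Set ℤ)
    (hFav : ∀ t ω, Fav t ω = {y : ℤ | ∀ z : ℤ, L t z ω ≤ L t y ω})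
    -- `f3 ω` is the number of times `t ≥ 1` at which the currently occupied site is a
    -- favorite site and there are exactly three favorite sites
    (f3 : Ω → ℕ∞)
    (hf3 : ∀ ω, f3 ω =
      {t : ℕ | 1 ≤ t ∧ S t ω ∈ Fav t ω ∧ (Fav t ω).encard = 3}.encard) :
    μ {ω | f3 ω = ⊤} = 0 ∨ μ {ω | f3 ω = ⊤} = 1 := by
  have hlaw (i : ℕ) : HasLaw (ξ i) fairSign μ := hasLaw_fairSign (hξmeas i) (hξ1 i) (hξ2 i)
  have hL' (t : ℕ) (ω : Ω) : (fun x ↦ L t x ω) = localTime (S · ω) t :=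
    funext fun x ↦ hL t x ω
  have hFav' (t : ℕ) (ω : Ω) : Fav t ω = favoriteSites (localTime (S · ω) t) := by
    rw [hFav, ← hL']
    rfl
  simpa only [hf3, encard_one_le_and_eq_top_iff, hFav', hS] using
    f_three_eq_top_zero_one_law_general hξindep (fun i ↦ (hlaw i).identDistrib (hlaw 0))
      (ae_frequently_sum_range_eq_of_hasLaw_fairSign hξmeas hξindep hlaw 0)
      fun y ℓ ↦ y ∈ favoriteSites ℓ ∧ (favoriteSites ℓ).encard = 3
end

section
/- Almost surely f(3) ≥ N, where N = Σ_{h=1}^∞ Σ_{k∈I_h∩ℤ} Σ_{x=1}^∞ 1_{A_{x,h}^{(k)}} (an identity of extended-natural-number valued random variables). In particular, if N = ∞ then f(3) = ∞. -/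
open MeasureTheory ProbabilityTheory
open scoped Classical

/-!
The inequality holds along every integer path. If the favorite sites at an inverse upcrossing time
`T = T_U(k + 1, x)` are `x, x + 1, x + 2`, then `T` is finite and the path sits at `x` at time `T`,
so `T` is counted by `f(3)`. The triple `(h, k, x)` can be read off from `T`: `x` is the current
position, `k + 1` its number of upcrossings and `h` its local time. Hence distinct triples give
distinct times.
-/

theorem summable_of_canonicallyOrderedAdd {ι M : Type*} [AddCommMonoid M] [CompleteLattice M]
    [CanonicallyOrderedAdd M] [TopologicalSpace M] [SupConvergenceClass M] (f : ι → M) :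
    Summable f :=
  ⟨_, tendsto_atTop_iSup fun _ _ hst => Finset.sum_le_sum_of_subset hst⟩

theorem tsum_ite_eq_encard {α : Type*} (p : α → Prop) [DecidablePred p] :
    ∑' a, (if p a then (1 : ℕ∞) else 0) = {a | p a}.encard := by
  refine ENat.toENNReal_inj.mp ?_
  calc ENat.toENNReal (∑' a, if p a then 1 else 0)
      = ∑' a, ENat.toENNReal (if p a then 1 else 0) :=
        (summable_of_canonicallyOrderedAdd _).map_tsum ENat.toENNRealRingHom
          ENat.continuous_toENNReal
    _ = ∑' a, {a | p a}.indicator 1 a := by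
        refine tsum_congr fun a => ?_
        by_cases ha : p a <;> simp [ha]
    _ = {a | p a}.encard := by
        rw [← tsum_subtype, ← ENNReal.tsum_set_one]
        rfl

theorem tsum_tsum_tsum_ite_eq_encard {α β γ : Type*} (p : α → β → γ → Prop)
    [∀ a b c, Decidable (p a b c)] :
    ∑' (a) (b) (c), (if p a b c then (1 : ℕ∞) else 0) =
      {q : α × β × γ | p q.1 q.2.1 q.2.2}.encard := by
  rw [← tsum_ite_eq_encard,
    (summable_of_canonicallyOrderedAdd _).tsum_prod' fun _ => summable_of_canonicallyOrderedAdd _]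
  refine tsum_congr fun a => ?_
  rw [(summable_of_canonicallyOrderedAdd _).tsum_prod' fun _ =>
    summable_of_canonicallyOrderedAdd _]

theorem tsum_tsum_tsum_ite_le_encard {α β γ δ : Type*} {p : α → β → γ → Prop}
    [∀ a b c, Decidable (p a b c)] {s : Set δ} {f : α × β × γ → δ} (hf : f.Injective)
    (hps : ∀ a b c, p a b c → f (a, b, c) ∈ s) :
    ∑' (a) (b) (c), (if p a b c then (1 : ℕ∞) else 0) ≤ s.encard := by
  rw [tsum_tsum_tsum_ite_eq_encard]
  exact Set.encard_le_encard_of_injOn (fun q hq => hps q.1 q.2.1 q.2.2 hq) hf.injOn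

section Path

/-- The local time `L(t, x)` of the path `s`: its number of visits to `x` in the times `1, …, t`.
The initial position `s 0` is not counted. -/
def localTime (s : ℕ → ℤ) (t : ℕ) (x : ℤ) : ℕ :=
  ((Finset.Icc 1 t).filter fun k => s k = x).card

/-- The set `𝒦(t)` of favorite sites of the path `s`: the sites of maximal local time at `t`. -/
def favoriteSites (s : ℕ → ℤ) (t : ℕ) : Set ℤ :=
  {y | ∀ z, localTime s t z ≤ localTime s t y}

/-- The number `U(t, x)` of upcrossings from `x - 1` to `x` made by the path `s` up to time `t`. -/
def upcrossingCount (s : ℕ → ℤ) (t : ℕ) (x : ℤ) : ℕ :=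
  ((Finset.Icc 1 t).filter fun k => s k = x ∧ s (k - 1) = x - 1).card

/-- The inverse upcrossing time `T_U(k, x)` of the path `s`: the first `t ≥ 1` with `U(t, x) = k`.
It takes the junk value `0`, instead of `∞`, if there is no such `t`. -/
noncomputable def inverseUpcrossingTime (s : ℕ → ℤ) (k : ℕ) (x : ℤ) : ℕ :=
  sInf {t | 1 ≤ t ∧ upcrossingCount s t x = k}

/-- The times counted by `f(3)`: those at which the path `s` sits at one of exactly three favorite
sites. -/
def threeFavoriteTimes (s : ℕ → ℤ) : Set ℕ :=
  {t | 1 ≤ t ∧ s t ∈ favoriteSites s t ∧ (favoriteSites s t).encard = 3}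

/-- The triples `(h, k, x)` for which the path `s` satisfies the event `A_{x,h}^{(k)}`: at time
`T_U(k + 1, x)` the favorite sites are `x, x + 1, x + 2`, and `x` has local time `h`. All integers
`x` and all `h, k` are admitted. -/
def consecutiveFavoriteTriples (s : ℕ → ℤ) : Set (ℕ × ℕ × ℤ) :=
  {(h, k, x) | favoriteSites s (inverseUpcrossingTime s (k + 1) x) = {x, x + 1, x + 2} ∧
    localTime s (inverseUpcrossingTime s (k + 1) x) x = h}

variable {s : ℕ → ℤ} {t h k : ℕ} {x : ℤ}

theorem favoriteSites_zero : favoriteSites s 0 = Set.univ := by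
  simp [favoriteSites, localTime]

theorem upcrossingCount_zero : upcrossingCount s 0 x = 0 := by
  simp [upcrossingCount]

theorem upcrossingCount_succ_of_ne (hx : s (t + 1) ≠ x) :
    upcrossingCount s (t + 1) x = upcrossingCount s t x := by
  rw [upcrossingCount, ← Finset.insert_Icc_right_eq_Icc_add_one (by lia), Finset.filter_insert,
    if_neg fun hup => hx hup.1, upcrossingCount]

theorem upcrossingCount_inverseUpcrossingTime (hT : inverseUpcrossingTime s k x ≠ 0) :
    upcrossingCount s (inverseUpcrossingTime s k x) x = k :=
  (Nat.sInf_mem (Nat.nonempty_of_pos_sInf (Nat.pos_of_ne_zero hT))).2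

theorem inverseUpcrossingTime_le (ht : 1 ≤ t) (hk : upcrossingCount s t x = k) :
    inverseUpcrossingTime s k x ≤ t :=
  Nat.sInf_le ⟨ht, hk⟩

theorem apply_inverseUpcrossingTime (hk : k ≠ 0) (hT : inverseUpcrossingTime s k x ≠ 0) :
    s (inverseUpcrossingTime s k x) = x := by
  by_contra hx
  have hcount := upcrossingCount_inverseUpcrossingTime hT
  obtain ⟨t, hTt⟩ := Nat.exists_eq_add_one_of_ne_zero hT
  rw [hTt] at hx hcount
  have hcount' : upcrossingCount s t x = k := by rwa [upcrossingCount_succ_of_ne hx] at hcount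
  have ht : t ≠ 0 := by
    rintro rfl
    exact hk (hcount'.symm.trans upcrossingCount_zero)
  have hle := inverseUpcrossingTime_le (Nat.one_le_iff_ne_zero.mpr ht) hcount'
  lia

theorem encard_consecutive_triple (x : ℤ) : ({x, x + 1, x + 2} : Set ℤ).encard = 3 :=
  Set.encard_eq_three.mpr ⟨x, x + 1, x + 2, by lia, by lia, by lia, rfl⟩

theorem inverseUpcrossingTime_ne_zero_of_mem (hs : (h, k, x) ∈ consecutiveFavoriteTriples s) :
    inverseUpcrossingTime s (k + 1) x ≠ 0 := by
  intro hT
  have huniv : ({x, x + 1, x + 2} : Set ℤ) = Set.univ := by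
    rw [← hs.1, hT, favoriteSites_zero]
  simpa [encard_consecutive_triple] using congrArg Set.encard huniv

theorem apply_inverseUpcrossingTime_of_mem (hs : (h, k, x) ∈ consecutiveFavoriteTriples s) :
    s (inverseUpcrossingTime s (k + 1) x) = x :=
  apply_inverseUpcrossingTime k.succ_ne_zero (inverseUpcrossingTime_ne_zero_of_mem hs)

theorem inverseUpcrossingTime_mem_threeFavoriteTimes
    (hs : (h, k, x) ∈ consecutiveFavoriteTriples s) :
    inverseUpcrossingTime s (k + 1) x ∈ threeFavoriteTimes s := by
  refine ⟨Nat.one_le_iff_ne_zero.mpr (inverseUpcrossingTime_ne_zero_of_mem hs), ?_, ?_⟩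
  · rw [apply_inverseUpcrossingTime_of_mem hs, hs.1]
    exact Set.mem_insert _ _
  · rw [hs.1, encard_consecutive_triple]

theorem leftInvOn_inverseUpcrossingTime (s : ℕ → ℤ) :
    Set.LeftInvOn (fun t => (localTime s t (s t), upcrossingCount s t (s t) - 1, s t))
      (fun q : ℕ × ℕ × ℤ => inverseUpcrossingTime s (q.2.1 + 1) q.2.2)
      (consecutiveFavoriteTriples s) := by
  rintro ⟨h, k, x⟩ hs
  have hcount := upcrossingCount_inverseUpcrossingTime (inverseUpcrossingTime_ne_zero_of_mem hs)
  simp only [apply_inverseUpcrossingTime_of_mem hs, hs.2, hcount, Nat.add_sub_cancel]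

theorem f_three_ge_N_general (s : ℕ → ℤ) :
    (consecutiveFavoriteTriples s).encard ≤ (threeFavoriteTimes s).encard :=
  Set.encard_le_encard_of_injOn (fun _ => inverseUpcrossingTime_mem_threeFavoriteTimes)
    (leftInvOn_inverseUpcrossingTime s).injOn

end Path

/-- Almost surely `f(3) ≥ N`, where
`N = Σ_{h=1}^∞ Σ_{k ∈ I_h ∩ ℤ} Σ_{x=1}^∞ 1_{A_{x,h}^{(k)}}`.
In particular, if `N = ∞` then `f(3) = ∞`. -/
theorem f_three_ge_N
    {Ω : Type*} [MeasurableSpace Ω] (μ : Measure Ω) [IsProbabilityMeasure μ]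
    -- i.i.d. steps, each uniform on {−1, 1}
    (ξ : ℕ → Ω → ℤ) (hξmeas : ∀ i, Measurable (ξ i))
    (hξindep : iIndepFun ξ μ)
    (hξ1 : ∀ i, μ {ω | ξ i ω = 1} = 1 / 2)
    (hξ2 : ∀ i, μ {ω | ξ i ω = -1} = 1 / 2)
    -- the simple random walk
    (S : ℕ → Ω → ℤ) (hS : ∀ t ω, S t ω = ∑ i ∈ Finset.range t, ξ i ω)
    -- local times
    (L : ℕ → ℤ → Ω → ℕ)
    (hL : ∀ t x ω, L t x ω = ((Finset.Icc 1 t).filter fun k => S k ω = x).card)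
    -- favorite (most visited) sites
    (Fav : ℕ → Ω → Set ℤ)
    (hFav : ∀ t ω, Fav t ω = {y : ℤ | ∀ z : ℤ, L t z ω ≤ L t y ω})
    -- `f3 ω` is the number of times `t ≥ 1` at which the currently occupied site is a
    -- favorite site and there are exactly three favorite sites
    (f3 : Ω → ℕ∞)
    (hf3 : ∀ ω, f3 ω =
      {t : ℕ | 1 ≤ t ∧ S t ω ∈ Fav t ω ∧ (Fav t ω).encard = 3}.encard)
    -- upcrossing counts
    (U : ℕ → ℤ → Ω → ℕ)
    (hU : ∀ t x ω, U t x ω =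
      ((Finset.Icc 1 t).filter fun k => S k ω = x ∧ S (k - 1) ω = x - 1).card)
    -- inverse upcrossing local times
    (TU : ℕ → ℤ → Ω → ℕ)
    (hTU : ∀ k x ω, TU k x ω = sInf {t : ℕ | 1 ≤ t ∧ U t x ω = k})
    -- the event of three consecutive favorite sites x, x+1, x+2, with local time h at x,
    -- at the inverse upcrossing time T_U(k+1, x)
    (A : ℕ → ℕ → ℕ → Set Ω)
    (hA : ∀ x h k, A x h k = {ω |
      Fav (TU (k + 1) (x : ℤ) ω) ω = {(x : ℤ), (x : ℤ) + 1, (x : ℤ) + 2} ∧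
      L (TU (k + 1) (x : ℤ) ω) (x : ℤ) ω = h})
    -- membership of k in the window I_h = ((h+√h)/2, (h+2√h)/2)
    (inI : ℕ → ℕ → Prop)
    (hinI : ∀ h k, inI h k ↔
      ((h : ℝ) + Real.sqrt h) / 2 < (k : ℝ) ∧ (k : ℝ) < ((h : ℝ) + 2 * Real.sqrt h) / 2)
    -- the count N of instances of three consecutive favorite sites
    (N : Ω → ℕ∞)
    (hN : ∀ ω, N ω = ∑' (h : ℕ) (k : ℕ) (x : ℕ),
      if 1 ≤ h ∧ 1 ≤ x ∧ inI h k ∧ ω ∈ A x h k then (1 : ℕ∞) else 0) :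
    ∀ᵐ ω ∂μ, N ω ≤ f3 ω := by
  refine Filter.Eventually.of_forall fun ω => ?_
  simp only [hN, hf3, hA, hTU, hU, hFav, hL]
  exact (tsum_tsum_tsum_ite_le_encard
    (Function.injective_id.prodMap (Function.injective_id.prodMap Nat.cast_injective))
    fun _ _ _ hp => hp.2.2.2).trans (f_three_ge_N_general fun t => S t ω)
end

section
/- There exists a constant C > 0 such that for all H ≥ 2, E[N_H²] ≤ C (log H) · E[N_H]. -/
open MeasureTheory ProbabilityTheory
open scoped Classical ENNReal

/-!
Suppose `x, x + 1, x + 2` are the favorite sites at time `s`, with local time `h`. If three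
consecutive sites are again favorite at a later time, with local time `h + m`, then the walk
restarted at time `s` ends at the lowest of three sites that fill up simultaneously when site `z`
is given the capacity `h + m - L(s, z) ≥ m` and no capacity is exceeded: a *tie*. It suffices to
show that a tie has probability `O(1 / m)` in total over all sites and times; summing over `m ≤ H`
gives the factor `log H`.

For this the walk is driven by independent stacks of fair arrows, one at each site. Since the order
in which arrows are used does not matter (the abelian property of Diaconis and Fulton), a tie at `x`
factorises into independent events on the stacks left of `x`, on the stacks of `x, x + 1, x + 2`,
and on the stacks right of `x + 2`. Weakening the requirement on the three central stacks turns it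
into the event that `x`, or that `x + 2`, is the first site to fill up, and comparing binomial
point probabilities with binomial tails shows that
`P(tie at x) ≤ (1024 / m) (P(x is first to fill up) + P(x + 2 is first to fill up))`.

Finally `∑ z, P(z is first to fill up) ≤ 4`, a Kraft inequality: an up step followed by a down step
after the first site has filled up overfills that site, so these continuations are disjoint events,
each costing a factor `1 / 4`.
-/

namespace FavoriteSites

section Binomial

/-- The point probability of the fair binomial distribution with `n` trials at `k`. -/
noncomputable def binomialProb (n k : ℕ) : ℝ := (n.choose k : ℝ) / 2 ^ n

/-- The upper tail from `k` on of the fair binomial distribution with `n` trials. -/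
noncomputable def binomialTail (n k : ℕ) : ℝ := ∑ i ∈ Finset.Icc k n, binomialProb n i

lemma binomialProb_nonneg (n k : ℕ) : 0 ≤ binomialProb n k := by
  unfold binomialProb; positivity

lemma binomialTail_nonneg (n k : ℕ) : 0 ≤ binomialTail n k :=
  Finset.sum_nonneg fun _ _ => binomialProb_nonneg _ _

lemma binomialProb_eq_zero_of_lt {n k : ℕ} (h : n < k) : binomialProb n k = 0 := by
  simp [binomialProb, Nat.choose_eq_zero_of_lt h]

lemma binomialProb_symm {n k : ℕ} (h : k ≤ n) : binomialProb n (n - k) = binomialProb n k := by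
  rw [binomialProb, binomialProb, Nat.choose_symm h]

lemma binomialProb_zero_succ (n : ℕ) : binomialProb (n + 1) 0 = binomialProb n 0 / 2 := by
  simp only [binomialProb, Nat.choose_zero_right, pow_succ]; ring

lemma binomialProb_succ_succ (n k : ℕ) :
    binomialProb (n + 1) (k + 1) = binomialProb n k / 2 + binomialProb n (k + 1) / 2 := by
  simp only [binomialProb, Nat.choose_succ_succ, pow_succ, Nat.cast_add]; ring

lemma binomialProb_succ_mul {n k : ℕ} (h : k ≤ n) :
    binomialProb n (k + 1) * (k + 1) = binomialProb n k * (n - k) := by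
  have hchoose : (n.choose (k + 1) : ℝ) * (k + 1) = n.choose k * (n - k) := by
    rw [← Nat.cast_sub h]; exact_mod_cast Nat.choose_succ_right_eq n k
  rw [binomialProb, binomialProb, div_mul_eq_mul_div, div_mul_eq_mul_div, hchoose]

lemma sum_binomialProb (n : ℕ) : ∑ i ∈ Finset.range (n + 1), binomialProb n i = 1 := by
  simp only [binomialProb]
  rw [← Finset.sum_div, div_eq_one_iff_eq (by positivity)]
  exact_mod_cast Nat.sum_range_choose n

lemma sq_centralBinom_mul_le (j : ℕ) : j.centralBinom ^ 2 * (3 * j + 1) ≤ 16 ^ j := by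
  induction j with
  | zero => simp
  | succ j ih =>
    refine Nat.le_of_mul_le_mul_left (c := (j + 1) ^ 2) ?_ (by positivity)
    calc (j + 1) ^ 2 * ((j + 1).centralBinom ^ 2 * (3 * (j + 1) + 1))
        = ((j + 1) * (j + 1).centralBinom) ^ 2 * (3 * (j + 1) + 1) := by ring
      _ = j.centralBinom ^ 2 * (4 * ((2 * j + 1) ^ 2 * (3 * j + 4))) := by
          rw [Nat.succ_mul_centralBinom_succ]; ring
      _ ≤ j.centralBinom ^ 2 * (4 * (4 * (j + 1) ^ 2 * (3 * j + 1))) :=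
          Nat.mul_le_mul_left _ (Nat.mul_le_mul_left _ (by nlinarith))
      _ = 16 * (j + 1) ^ 2 * (j.centralBinom ^ 2 * (3 * j + 1)) := by ring
      _ ≤ 16 * (j + 1) ^ 2 * 16 ^ j := by gcongr
      _ = (j + 1) ^ 2 * 16 ^ (j + 1) := by ring

lemma mul_sq_choose_le (n k : ℕ) : n * n.choose k ^ 2 ≤ 4 ^ n := by
  have h_middle : n * n.choose k ^ 2 ≤ n * n.choose (n / 2) ^ 2 := by
    gcongr; exact Nat.choose_le_middle k n
  refine h_middle.trans ?_
  rcases Nat.even_or_odd' n with ⟨j, rfl | rfl⟩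
  · have h := sq_centralBinom_mul_le j
    rw [Nat.centralBinom] at h
    rw [show 2 * j / 2 = j by omega, pow_mul]
    norm_num
    nlinarith [sq_nonneg ((2 * j).choose j)]
  · have h := sq_centralBinom_mul_le (j + 1)
    have hpow : 4 ^ (2 * j + 1) * 4 = 16 ^ (j + 1) := by
      rw [← pow_succ, show 2 * j + 1 + 1 = 2 * (j + 1) by ring, pow_mul]; norm_num
    have hdouble : (2 * (j + 1)).choose (j + 1) = 2 * (2 * j + 1).choose j := by
      rw [show 2 * (j + 1) = (2 * j + 1) + 1 by ring, Nat.choose_succ_succ, Nat.choose_symm_half]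
      ring
    rw [Nat.centralBinom, hdouble] at h
    rw [show (2 * j + 1) / 2 = j by omega]
    nlinarith [sq_nonneg ((2 * j + 1).choose j)]

lemma binomialProb_le_inv_sqrt {b n : ℕ} (hb : 0 < b) (hbn : b ≤ n) (k : ℕ) :
    binomialProb n k ≤ 1 / √b := by
  have h_choose : (b : ℝ) * (n.choose k : ℝ) ^ 2 ≤ (2 ^ n) ^ 2 := by
    calc (b : ℝ) * (n.choose k : ℝ) ^ 2 ≤ n * (n.choose k : ℝ) ^ 2 := by gcongr
      _ ≤ 4 ^ n := by exact_mod_cast mul_sq_choose_le n k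
      _ = (2 ^ n) ^ 2 := by rw [← pow_mul, mul_comm, pow_mul]; norm_num
  rw [binomialProb, div_le_div_iff₀ (by positivity) (by positivity), one_mul]
  refine le_of_sq_le_sq ?_ (by positivity)
  rwa [mul_pow, Real.sq_sqrt (by positivity), mul_comm]

lemma binomialProb_le_two_mul_succ (n k : ℕ) :
    binomialProb n k ≤ 2 * binomialProb (n + 1) k := by
  cases k with
  | zero => rw [binomialProb_zero_succ]; linarith
  | succ k => rw [binomialProb_succ_succ]; linarith [binomialProb_nonneg n k]

lemma binomialProb_le_succ_trials {n k : ℕ} (h : n + 1 ≤ 2 * k) :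
    binomialProb n k ≤ binomialProb (n + 1) k := by
  obtain ⟨k, rfl⟩ : ∃ j, k = j + 1 := ⟨k - 1, by omega⟩
  suffices binomialProb n (k + 1) ≤ binomialProb n k by
    rw [binomialProb_succ_succ]; linarith
  rcases le_or_gt k n with hk | hk
  · refine le_of_mul_le_mul_right ?_ (by positivity : (0 : ℝ) < k + 1)
    rw [binomialProb_succ_mul hk]
    have : (n : ℝ) - k ≤ k + 1 := by
      rw [sub_le_iff_le_add]; norm_cast; omega
    exact mul_le_mul_of_nonneg_left this (binomialProb_nonneg n k)
  · rw [binomialProb_eq_zero_of_lt (by omega), binomialProb_eq_zero_of_lt hk]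

lemma binomialProb_le_add_trials {n k j : ℕ} (h : n + j ≤ 2 * k) :
    binomialProb n k ≤ binomialProb (n + j) k := by
  induction j with
  | zero => rfl
  | succ j ih => exact (ih (by omega)).trans (binomialProb_le_succ_trials (by omega))

lemma binomialProb_le_two_mul_of_near {b c n : ℕ} (hcb : c ≤ b) (hn : b + c ≤ n + 1)
    (hn' : n ≤ b + c + 1) : binomialProb n c ≤ 2 * binomialProb (b + c) c := by
  obtain h | rfl | rfl : n + 1 = b + c ∨ n = b + c ∨ n = b + c + 1 := by omega
  · exact h ▸ binomialProb_le_two_mul_succ n c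
  · linarith [binomialProb_nonneg (b + c) c]
  · cases c with
    | zero => rw [add_zero, binomialProb_zero_succ]; linarith [binomialProb_nonneg b 0]
    | succ c =>
      have h_mono : binomialProb (b + (c + 1)) c ≤ binomialProb (b + (c + 1)) (c + 1) := by
        unfold binomialProb
        gcongr ?_ / _
        exact_mod_cast Nat.choose_le_succ_of_lt_half_left (by omega)
      rw [binomialProb_succ_succ]
      linarith [binomialProb_nonneg (b + (c + 1)) (c + 1)]

lemma binomialTail_eq_add (n k : ℕ) :
    binomialTail n k = binomialProb n k + binomialTail n (k + 1) := by
  rcases le_or_gt k n with hk | hk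
  · rw [binomialTail, ← Finset.insert_Icc_add_one_left_eq_Icc hk, Finset.sum_insert (by simp)]
    rfl
  · rw [binomialTail, binomialTail, Finset.Icc_eq_empty (by omega), Finset.Icc_eq_empty (by omega),
      binomialProb_eq_zero_of_lt hk, Finset.sum_empty, add_zero]

lemma binomialTail_succ_succ (n k : ℕ) :
    binomialTail (n + 1) (k + 1) = binomialTail n (k + 1) + binomialProb n k / 2 := by
  rcases le_or_gt k n with hk | hk
  · induction hk using Nat.decreasingInduction with
    | self =>
      simp [binomialTail, binomialProb_succ_succ, binomialProb_eq_zero_of_lt]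
    | of_succ k hk ih =>
      rw [binomialTail_eq_add (n + 1), ih, binomialProb_succ_succ, binomialTail_eq_add n (k + 1)]
      ring
  · rw [binomialTail, binomialTail, Finset.Icc_eq_empty (by omega), Finset.Icc_eq_empty (by omega),
      binomialProb_eq_zero_of_lt hk, Finset.sum_empty, Finset.sum_empty, zero_div, add_zero]

lemma binomialTail_antitone (c : ℕ) : Antitone fun k => binomialTail (k + c) k := by
  refine antitone_nat_of_succ_le fun k => ?_
  change binomialTail (k + 1 + c) (k + 1) ≤ binomialTail (k + c) k
  rw [add_right_comm, binomialTail_succ_succ, binomialTail_eq_add (k + c) k]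
  linarith [binomialProb_nonneg (k + c) k]

lemma mul_binomialProb_le_binomialTail {n k j : ℕ} (h : n + j ≤ 2 * k + 1) :
    j * (binomialProb n k / 2) ≤ binomialTail (n + j) (k + 1) := by
  induction j with
  | zero => simp [binomialTail_nonneg]
  | succ j ih =>
    rw [← add_assoc, binomialTail_succ_succ]
    push_cast
    linarith [ih (by omega), binomialProb_le_add_trials (n := n) (k := k) (j := j) (by omega)]

lemma binomialTail_add_window_add_binomialTail (c J : ℕ) :
    binomialTail (c + J + 1 + c) (c + J + 1) +
      ∑ i ∈ Finset.Ico (c + 1) (c + J + 1), binomialProb (c + J + 1 + c) i +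
      binomialTail (c + J + 1 + c) (c + J + 1) = 1 := by
  set n := c + J + 1 + c
  have hlower : ∑ i ∈ Finset.range (c + 1), binomialProb n i = binomialTail n (c + J + 1) := by
    refine Finset.sum_nbij' (fun i => n - i) (fun i => n - i) ?_ ?_ ?_ ?_ ?_ <;> intro i hi <;>
      simp only [Finset.mem_range, Finset.mem_Icc] at hi ⊢
    case refine_5 => rw [binomialProb_symm (by omega)]
    all_goals omega
  have hupper : ∑ i ∈ Finset.Ico (c + J + 1) (n + 1), binomialProb n i =
      binomialTail n (c + J + 1) := rfl
  nth_rw 1 [← hlower]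
  rw [← hupper, Finset.range_eq_Ico, Finset.sum_Ico_consecutive _ (by omega) (by omega),
    Finset.sum_Ico_consecutive _ (by omega) (by omega), ← Finset.range_eq_Ico]
  exact sum_binomialProb n

/-- An integer `J ≥ √(c + 1) / 2` of order `√c`, so small that a fair binomial with `2c + J + 1`
trials exceeds `c + J` with probability bounded below. -/
def deviation (c : ℕ) : ℕ := Nat.sqrt c / 2 + 1

lemma sqrt_le_two_mul_deviation (c : ℕ) : √((c : ℝ) + 1) ≤ 2 * deviation c := by
  refine Real.sqrt_le_iff.2 ⟨by positivity, ?_⟩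
  have h : c + 1 ≤ (2 * deviation c) ^ 2 :=
    calc c + 1 ≤ (Nat.sqrt c + 1) ^ 2 := Nat.lt_succ_sqrt' c
      _ ≤ (2 * deviation c) ^ 2 := by gcongr; unfold deviation; omega
  exact_mod_cast h

lemma window_le_seven_eighths (c : ℕ) :
    ∑ i ∈ Finset.Ico (c + 1) (c + deviation c + 1), binomialProb (c + deviation c + 1 + c) i ≤
      7 / 8 := by
  set J := deviation c with hJ
  set n := c + J + 1 + c with hn
  have hJn : 4 * (J * J) ≤ 3 * n := by
    have hle : 2 * J ≤ Nat.sqrt c + 2 := by rw [hJ, deviation]; omega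
    have : 1 ≤ J := by rw [hJ, deviation]; omega
    nlinarith [sq_nonneg ((Nat.sqrt c : ℤ) - 1), Nat.sqrt_le c]
  have hJ_le : (J : ℝ) ≤ 7 / 8 * √n := by
    refine le_of_sq_le_sq ?_ (by positivity)
    rw [mul_pow, Real.sq_sqrt (by positivity)]
    have : 4 * ((J : ℝ) * J) ≤ 3 * n := by exact_mod_cast hJn
    nlinarith
  calc ∑ i ∈ Finset.Ico (c + 1) (c + J + 1), binomialProb n i
      ≤ ∑ i ∈ Finset.Ico (c + 1) (c + J + 1), 1 / √n :=
        Finset.sum_le_sum fun i _ => binomialProb_le_inv_sqrt (by omega) le_rfl i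
    _ = J / √n := by simp [div_eq_mul_inv]
    _ ≤ 7 / 8 := (div_le_iff₀ (by positivity)).2 hJ_le

lemma one_sixteenth_le_binomialTail {k c : ℕ} (h : k ≤ c + deviation c + 1) :
    1 / 16 ≤ binomialTail (k + c) k := by
  refine le_trans ?_ (binomialTail_antitone c h)
  linarith [binomialTail_add_window_add_binomialTail c (deviation c), window_le_seven_eighths c]

lemma sqrt_mul_binomialProb_le_binomialTail {b c : ℕ} (h : c + deviation c < b) :
    √b * binomialProb (b + c) c ≤ 4 * binomialTail (b + c + deviation c) b := by
  obtain ⟨d, rfl⟩ : ∃ d, b = d + 1 := ⟨b - 1, by omega⟩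
  set J := deviation c
  have h_tail := mul_binomialProb_le_binomialTail (n := d + 1 + c) (k := d) (j := J) (by omega)
  have h_shift : binomialProb (d + 1 + c) d = binomialProb (d + 1 + c) c * (d + 1) / (c + 1) := by
    rw [eq_div_iff (by positivity), ← binomialProb_symm (by omega : d ≤ d + 1 + c),
      show d + 1 + c - d = c + 1 by omega, binomialProb_succ_mul (by omega)]
    push_cast; ring
  have h_sqrt : √((d : ℝ) + 1) ≤ 2 * J * (d + 1) / (c + 1) := by
    rw [le_div_iff₀ (by positivity)]
    have hcd : √((c : ℝ) + 1) ≤ √((d : ℝ) + 1) :=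
      Real.sqrt_le_sqrt (by norm_cast; omega)
    calc √((d : ℝ) + 1) * (c + 1)
        = √((d : ℝ) + 1) * (√((c : ℝ) + 1) * √((c : ℝ) + 1)) := by
          rw [Real.mul_self_sqrt (by positivity)]
      _ ≤ √((d : ℝ) + 1) * (2 * J * √((d : ℝ) + 1)) := by
          gcongr; exact sqrt_le_two_mul_deviation c
      _ = 2 * J * (√((d : ℝ) + 1) * √((d : ℝ) + 1)) := by ring
      _ = 2 * J * (d + 1) := by rw [Real.mul_self_sqrt (by positivity)]
  calc √(d + 1 : ℕ) * binomialProb (d + 1 + c) c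
      ≤ (2 * J * (d + 1) / (c + 1)) * binomialProb (d + 1 + c) c := by
        rw [Nat.cast_succ]; gcongr; exact binomialProb_nonneg _ _
    _ = 4 * (J * (binomialProb (d + 1 + c) d / 2)) := by rw [h_shift]; ring
    _ ≤ 4 * binomialTail (d + 1 + c + J) (d + 1) := by gcongr

lemma prob_mul_prob_le_tail_mul_tail_of_le {a b o c n : ℕ} (hab : a ≤ b) (hb : 1 ≤ b)
    (ho : o ≤ 1) (hn : b + c ≤ n + 1) (h : b ≤ c + deviation c) :
    binomialProb (a + b) a * binomialProb n c ≤
      512 / b * (binomialTail (a + b) a * binomialTail (b + o + c) (b + o)) := by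
  have hb0 : (0 : ℝ) < b := by positivity
  have h_first : 1 / 16 ≤ binomialTail (a + b) a := one_sixteenth_le_binomialTail (by omega)
  have h_second : 1 / 16 ≤ binomialTail (b + o + c) (b + o) :=
    one_sixteenth_le_binomialTail (by omega)
  have h_n : binomialProb n c ≤ 2 * (1 / √b) :=
    (binomialProb_le_two_mul_succ n c).trans
      (by gcongr; exact binomialProb_le_inv_sqrt hb (by omega) c)
  calc binomialProb (a + b) a * binomialProb n c ≤ 1 / √b * (2 * (1 / √b)) := by
        gcongr
        · exact binomialProb_nonneg _ _
        · exact binomialProb_le_inv_sqrt hb (by omega) a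
    _ = 2 / (√b * √b) := by ring
    _ = 512 / b * (1 / 16 * (1 / 16)) := by rw [Real.mul_self_sqrt hb0.le]; ring
    _ ≤ _ := by gcongr

lemma prob_mul_prob_le_tail_mul_tail_of_lt {a b o c n : ℕ} (hab : a ≤ b) (ho : o ≤ 1)
    (hn : b + c ≤ n + 1) (hn' : n ≤ b + c + 1) (h : c + deviation c < b) :
    binomialProb (a + b) a * binomialProb n c ≤
      512 / b * (binomialTail (a + (c + deviation c)) a *
        binomialTail (c + deviation c + o + c) (c + deviation c + o)) := by
  set e := c + deviation c
  have hb0 : (0 : ℝ) < b := by norm_cast; omega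
  have h_first : binomialTail (b + c + deviation c) b ≤ binomialTail (a + e) a := by
    rw [add_assoc]; exact binomialTail_antitone e hab
  have h_second : 1 / 16 ≤ binomialTail (e + o + c) (e + o) :=
    one_sixteenth_le_binomialTail (by omega)
  calc binomialProb (a + b) a * binomialProb n c
      ≤ 1 / √b * (2 * binomialProb (b + c) c) := by
        gcongr
        · exact binomialProb_nonneg _ _
        · exact binomialProb_le_inv_sqrt (by omega) (by omega) a
        · exact binomialProb_le_two_mul_of_near (by omega) hn hn'
    _ = 2 * (√b * binomialProb (b + c) c) / (√b * √b) := by field_simp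
    _ = 2 * (√b * binomialProb (b + c) c) / b := by rw [Real.mul_self_sqrt hb0.le]
    _ ≤ 2 * (4 * binomialTail (a + e) a) / b := by
        gcongr ?_ / _
        linarith [sqrt_mul_binomialProb_le_binomialTail h]
    _ = 128 / b * (binomialTail (a + e) a * (1 / 16)) := by ring
    _ ≤ 512 / b * (binomialTail (a + e) a * binomialTail (e + o + c) (e + o)) := by
        gcongr
        · exact mul_nonneg (binomialTail_nonneg _ _) (by norm_num)
        · norm_num
        · exact binomialTail_nonneg _ _

lemma exists_prob_mul_prob_le_tail_mul_tail {a b o c n : ℕ} (hab : a ≤ b) (hb : 1 ≤ b)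
    (ho : o ≤ 1) (hn : b + c ≤ n + 1) (hn' : n ≤ b + c + 1) :
    ∃ e ≤ b, binomialProb (a + b) a * binomialProb n c ≤
      512 / b * (binomialTail (a + e) a * binomialTail (e + o + c) (e + o)) := by
  rcases le_or_gt b (c + deviation c) with h | h
  · exact ⟨b, le_rfl, prob_mul_prob_le_tail_mul_tail_of_le hab hb ho hn h⟩
  · exact ⟨_, h.le, prob_mul_prob_le_tail_mul_tail_of_lt hab ho hn hn' h⟩

end Binomial

section Walk

/-- The increment of the walk coded by a bit. -/
def step (b : Bool) : ℤ := if b then 1 else -1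

/-- The nearest-neighbour walk started at `x₀` with step sequence `f`. -/
def walk (x₀ : ℤ) (f : ℕ → Bool) : ℕ → ℤ
  | 0 => x₀
  | t + 1 => walk x₀ f t + step (f t)

/-- The number of steps the walk takes from `z` before time `t`. -/
def departures (x₀ : ℤ) (f : ℕ → Bool) (t : ℕ) (z : ℤ) : ℕ :=
  ((Finset.range t).filter fun k => walk x₀ f k = z).card

/-- The local time of the walk at `z` up to time `t`; as in the source, time `0` is not counted. -/
def visits (x₀ : ℤ) (f : ℕ → Bool) (t : ℕ) (z : ℤ) : ℕ :=
  ((Finset.Icc 1 t).filter fun k => walk x₀ f k = z).card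

/-- The step sequence that follows `f` up to time `s` and then `g`. -/
def splice (s : ℕ) (f g : ℕ → Bool) : ℕ → Bool := fun i => if i < s then f i else g (i - s)

variable (x₀ : ℤ) (f g : ℕ → Bool) (s t : ℕ) (z : ℤ)

@[simp] lemma walk_zero : walk x₀ f 0 = x₀ := rfl

lemma walk_succ : walk x₀ f (t + 1) = walk x₀ f t + step (f t) := rfl

@[simp] lemma departures_zero : departures x₀ f 0 z = 0 := by simp [departures]

lemma departures_succ :
    departures x₀ f (t + 1) z = departures x₀ f t z + if walk x₀ f t = z then 1 else 0 := by
  unfold departures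
  rw [Finset.range_add_one, Finset.filter_insert]
  split_ifs <;> simp

@[simp] lemma visits_zero : visits x₀ f 0 z = 0 := by simp [visits]

lemma visits_succ :
    visits x₀ f (t + 1) z = visits x₀ f t z + if walk x₀ f (t + 1) = z then 1 else 0 := by
  unfold visits
  rw [← Finset.insert_Icc_right_eq_Icc_add_one (by omega), Finset.filter_insert]
  split_ifs <;> simp

lemma visits_add_eq_departures_add :
    visits x₀ f t z + (if x₀ = z then 1 else 0) =
      departures x₀ f t z + if walk x₀ f t = z then 1 else 0 := by
  induction t with
  | zero => rw [visits_zero, departures_zero, walk_zero]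
  | succ t ih => rw [visits_succ, departures_succ]; omega

lemma visits_mono : Monotone fun t => visits x₀ f t z :=
  monotone_nat_of_le_succ fun t => by simp only [visits_succ]; omega

lemma departures_mono : Monotone fun t => departures x₀ f t z :=
  monotone_nat_of_le_succ fun t => by simp only [departures_succ]; omega

lemma sum_departures {F : Finset ℤ} (hF : ∀ k < t, walk x₀ f k ∈ F) :
    ∑ z ∈ F, departures x₀ f t z = t := by
  unfold departures
  rw [← Finset.card_eq_sum_card_fiberwise fun k hk => hF k (Finset.mem_range.1 hk),
    Finset.card_range]

lemma finite_support_departures : (Function.support (departures x₀ f t)).Finite := by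
  refine ((Finset.range t).image (walk x₀ f)).finite_toSet.subset fun z hz => ?_
  rw [Function.mem_support, departures, Finset.card_ne_zero] at hz
  simpa [Finset.filter_nonempty_iff] using hz

variable {x₀ f t z} in
lemma exists_departures_eq {j : ℕ} (h : j < departures x₀ f t z) :
    ∃ k < t, walk x₀ f k = z ∧ departures x₀ f k z = j := by
  induction t with
  | zero => simp at h
  | succ t ih =>
    rcases lt_or_ge j (departures x₀ f t z) with hj | hj
    · obtain ⟨k, hk, hkj⟩ := ih hj
      exact ⟨k, by omega, hkj⟩
    · rw [departures_succ] at h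
      split_ifs at h with hz
      · exact ⟨t, by omega, hz, by omega⟩
      · omega

lemma dependsOn_walk : DependsOn (fun f => walk x₀ f t) (Set.Iio t) := by
  induction t with
  | zero => intro f g _; rfl
  | succ t ih =>
    intro f g h
    simp only [walk_succ, h t (Set.mem_Iio.2 t.lt_succ_self),
      show walk x₀ f t = walk x₀ g t from ih fun i hi => h i (Nat.lt_succ_of_lt hi)]

lemma dependsOn_visits : DependsOn (fun f => visits x₀ f t z) (Set.Iio t) := by
  intro f g h
  refine congrArg Finset.card (Finset.filter_congr fun k hk => ?_)
  have hkt := (Finset.mem_Icc.1 hk).2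
  rw [show walk x₀ f k = walk x₀ g k from
    dependsOn_walk x₀ k fun i hi => h i (lt_of_lt_of_le hi hkt)]

lemma splice_of_lt {i : ℕ} (hi : i < s) : splice s f g i = f i := if_pos hi

lemma splice_add (i : ℕ) : splice s f g (s + i) = g i := by simp [splice]

lemma walk_splice_self : walk x₀ (splice s f g) s = walk x₀ f s :=
  dependsOn_walk x₀ s fun _ hi => splice_of_lt f g s hi

lemma visits_splice_self : visits x₀ (splice s f g) s z = visits x₀ f s z :=
  dependsOn_visits x₀ s z fun _ hi => splice_of_lt f g s hi

lemma walk_splice_add : walk x₀ (splice s f g) (s + t) = walk (walk x₀ f s) g t := by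
  induction t with
  | zero => exact walk_splice_self x₀ f g s
  | succ t ih => rw [← add_assoc, walk_succ, walk_succ, ih, splice_add]

lemma visits_splice_add : visits x₀ (splice s f g) (s + t) z =
    visits x₀ f s z + visits (walk x₀ f s) g t z := by
  induction t with
  | zero => exact visits_splice_self x₀ f g s z
  | succ t ih =>
    rw [← add_assoc, visits_succ, visits_succ, ih, add_assoc s t 1, walk_splice_add, add_assoc]

end Walk

section ArrowStacks

/-- The number of the first `n` arrows at `z` that equal `b`, in the arrow stacks `w`: the bit
`w (z, i)` is the direction in which a walk leaves `z` for the `i`-th time. -/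
def arrowCount (b : Bool) (w : ℤ × ℕ → Bool) (z : ℤ) (n : ℕ) : ℕ :=
  ((Finset.range n).filter fun i => w (z, i) = b).card

/-- The step sequence `f` started at `x₀` uses up the arrow stacks `w`. -/
def Follows (x₀ : ℤ) (w : ℤ × ℕ → Bool) (f : ℕ → Bool) : Prop :=
  ∀ t, f t = w (walk x₀ f t, departures x₀ f t (walk x₀ f t))

/-- Position and numbers of used arrows after `t` steps of the walk driven by the stacks `w`. -/
def stackState (x₀ : ℤ) (w : ℤ × ℕ → Bool) : ℕ → ℤ × (ℤ → ℕ)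
  | 0 => (x₀, 0)
  | t + 1 =>
    let s := stackState x₀ w t
    (s.1 + step (w (s.1, s.2 s.1)), fun z => s.2 z + if s.1 = z then 1 else 0)

/-- The steps of the walk from `x₀` driven by the stacks `w`. -/
def stackSteps (x₀ : ℤ) (w : ℤ × ℕ → Bool) (t : ℕ) : Bool :=
  w ((stackState x₀ w t).1, (stackState x₀ w t).2 (stackState x₀ w t).1)

/-- No walk following `w` leaves `z` more than `D z` times while respecting the bounds `D` at the
neighbours of `z`: there are too few arrivals at `z`, or the `D z` first arrows at `z` use up all
the crossings that its left, respectively right, neighbour can compensate. -/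
def CannotOverflow (x₀ : ℤ) (w : ℤ × ℕ → Bool) (D : ℤ → ℕ) (z : ℤ) : Prop :=
  (arrowCount true w (z - 1) (D (z - 1)) + arrowCount false w (z + 1) (D (z + 1)) +
    (if x₀ = z then 1 else 0) ≤ D z) ∨
  (arrowCount true w (z - 1) (D (z - 1)) + (if z ≤ x₀ then 1 else 0) ≤
    arrowCount false w z (D z)) ∨
  (arrowCount false w (z + 1) (D (z + 1)) + (if x₀ ≤ z then 1 else 0) ≤
    arrowCount true w z (D z))

variable {x₀ : ℤ} {w : ℤ × ℕ → Bool} {f : ℕ → Bool}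

@[simp] lemma arrowCount_zero (b : Bool) (w : ℤ × ℕ → Bool) (z : ℤ) : arrowCount b w z 0 = 0 := by
  simp [arrowCount]

lemma arrowCount_succ (b : Bool) (w : ℤ × ℕ → Bool) (z : ℤ) (n : ℕ) :
    arrowCount b w z (n + 1) = arrowCount b w z n + if w (z, n) = b then 1 else 0 := by
  unfold arrowCount
  rw [Finset.range_add_one, Finset.filter_insert]
  split_ifs <;> simp

lemma arrowCount_true_add_false (w : ℤ × ℕ → Bool) (z : ℤ) (n : ℕ) :
    arrowCount true w z n + arrowCount false w z n = n := by
  induction n with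
  | zero => simp
  | succ n ih => rw [arrowCount_succ, arrowCount_succ]; cases w (z, n) <;> simp <;> omega

lemma arrowCount_mono (b : Bool) (w : ℤ × ℕ → Bool) (z : ℤ) : Monotone (arrowCount b w z) :=
  monotone_nat_of_le_succ fun t => by simp only [arrowCount_succ]; omega

lemma stackState_eq (x₀ : ℤ) (w : ℤ × ℕ → Bool) (t : ℕ) : stackState x₀ w t =
    (walk x₀ (stackSteps x₀ w) t, departures x₀ (stackSteps x₀ w) t) := by
  induction t with
  | zero => ext <;> simp [stackState]
  | succ t ih =>
    refine Prod.ext ?_ (funext fun z => ?_)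
    · rw [walk_succ, stackSteps, ih, stackState, ih]
    · change _ = departures x₀ (stackSteps x₀ w) (t + 1) z
      rw [departures_succ, stackState, ih]

lemma follows_stackSteps (x₀ : ℤ) (w : ℤ × ℕ → Bool) : Follows x₀ w (stackSteps x₀ w) := by
  intro t
  rw [stackSteps, stackState_eq]

lemma Follows.arrowCount_succ (hf : Follows x₀ w f) (b : Bool) (t : ℕ) (z : ℤ) :
    arrowCount b w z (departures x₀ f (t + 1) z) = arrowCount b w z (departures x₀ f t z) +
      if walk x₀ f t = z ∧ f t = b then 1 else 0 := by
  rw [departures_succ]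
  by_cases h : walk x₀ f t = z
  · have hft := hf t
    rw [h] at hft
    simp [h, FavoriteSites.arrowCount_succ, hft]
  · simp [h]

lemma Follows.flow (hf : Follows x₀ w f) (t : ℕ) (z : ℤ) :
    arrowCount true w z (departures x₀ f t z) + (if walk x₀ f t ≤ z then 1 else 0) =
      arrowCount false w (z + 1) (departures x₀ f t (z + 1)) + if x₀ ≤ z then 1 else 0 := by
  induction t with
  | zero => rw [departures_zero, departures_zero, arrowCount_zero, arrowCount_zero, walk_zero]
  | succ t ih =>
    rw [hf.arrowCount_succ, hf.arrowCount_succ, walk_succ]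
    cases f t <;> simp [step] <;> split_ifs at * <;> omega

lemma Follows.arrivals (hf : Follows x₀ w f) (t : ℕ) (z : ℤ) :
    departures x₀ f t z + (if walk x₀ f t = z then 1 else 0) =
      arrowCount true w (z - 1) (departures x₀ f t (z - 1)) +
        arrowCount false w (z + 1) (departures x₀ f t (z + 1)) + if x₀ = z then 1 else 0 := by
  have h_right := hf.flow t z
  have h_left := hf.flow t (z - 1)
  rw [sub_add_cancel] at h_left
  have h_total := arrowCount_true_add_false w z (departures x₀ f t z)
  split_ifs at * <;> omega

lemma Follows.departures_ne_bound (hf : Follows x₀ w f) {D : ℤ → ℕ} {t : ℕ}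
    (hD : CannotOverflow x₀ w D (walk x₀ f t)) (hle : ∀ z, departures x₀ f t z ≤ D z) :
    departures x₀ f t (walk x₀ f t) ≠ D (walk x₀ f t) := by
  intro heq
  set z := walk x₀ f t with hz
  have h_up := arrowCount_mono true w (z - 1) (hle (z - 1))
  have h_down := arrowCount_mono false w (z + 1) (hle (z + 1))
  have h_arr := hf.arrivals t z
  have h_right := hf.flow t z
  have h_left := hf.flow t (z - 1)
  rw [sub_add_cancel] at h_left
  rw [heq] at h_arr h_right h_left
  rw [← hz] at h_arr h_right h_left
  rcases hD with h | h | h <;> split_ifs at * <;> omega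

/-- An analogue of the least action principle: the walk cannot stay within the finite bounds `D`
for ever, and it can only leave them at `e`. -/
lemma Follows.exists_departures_eq_bound (hf : Follows x₀ w f) (e : ℤ) (D : ℤ →₀ ℕ)
    (hD : ∀ z, z ≠ e → CannotOverflow x₀ w D z) :
    ∃ t, walk x₀ f t = e ∧ departures x₀ f t e = D e ∧ ∀ z, departures x₀ f t z ≤ D z := by
  by_contra! hcon
  have h_le : ∀ t z, departures x₀ f t z ≤ D z := by
    intro t
    induction t with
    | zero => simp
    | succ t ih =>
      have hne : departures x₀ f t (walk x₀ f t) ≠ D (walk x₀ f t) := by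
        rcases eq_or_ne (walk x₀ f t) e with he | he
        · intro heq
          obtain ⟨y, hy⟩ := hcon t he (he ▸ heq)
          exact absurd (ih y) hy.not_ge
        · exact hf.departures_ne_bound (hD _ he) ih
      intro z
      rw [departures_succ]
      split_ifs with hz
      · subst hz
        exact lt_of_le_of_ne (ih _) hne
      · exact ih z
  have h_mem : ∀ t, walk x₀ f t ∈ D.support := fun t => by
    have h := h_le (t + 1) (walk x₀ f t)
    rw [departures_succ, if_pos rfl] at h
    rw [Finsupp.mem_support_iff]
    omega
  have h_total := sum_departures x₀ f (∑ z ∈ D.support, D z + 1) fun k _ => h_mem k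
  have h_sum := Finset.sum_le_sum fun z (_ : z ∈ D.support) => h_le (∑ z ∈ D.support, D z + 1) z
  omega

lemma Follows.last_arrow_down (hf : Follows x₀ w f) {t : ℕ} {z : ℤ} (hz : walk x₀ f t < z)
    (hpos : 0 < departures x₀ f t z) :
    arrowCount true w z (departures x₀ f t z - 1) = arrowCount true w z (departures x₀ f t z) := by
  obtain ⟨k, hkt, hkz, hk⟩ := exists_departures_eq (Nat.sub_lt hpos one_pos)
  have h_flow := hf.flow t (z - 1)
  have h_flow_k := hf.flow k (z - 1)
  rw [sub_add_cancel] at h_flow h_flow_k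
  rw [hk] at h_flow_k
  have h_up : arrowCount true w (z - 1) (departures x₀ f k (z - 1)) ≤
      arrowCount true w (z - 1) (departures x₀ f t (z - 1)) :=
    arrowCount_mono true w (z - 1) (departures_mono x₀ f (z - 1) hkt.le)
  have h_total := arrowCount_true_add_false w z (departures x₀ f t z)
  have h_total_pred := arrowCount_true_add_false w z (departures x₀ f t z - 1)
  have h_mono := arrowCount_mono true w z (Nat.sub_le (departures x₀ f t z) 1)
  split_ifs at * <;> omega

end ArrowStacks

section CoinFlips

/-- The law of a fair coin. -/
noncomputable def fairCoin : Measure Bool := (PMF.uniformOfFintype Bool).toMeasure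

instance : IsProbabilityMeasure fairCoin := by unfold fairCoin; infer_instance

/-- The law of independent fair coins indexed by `ι`. -/
noncomputable def coinFlips (ι : Type*) : Measure (ι → Bool) := Measure.infinitePi fun _ => fairCoin

instance (ι : Type*) : IsProbabilityMeasure (coinFlips ι) := by unfold coinFlips; infer_instance

variable {ι β Ω : Type*} [MeasurableSpace Ω]

lemma fairCoin_singleton (b : Bool) : fairCoin {b} = 2⁻¹ := by
  simp [fairCoin]

lemma eq_fairCoin {ν : Measure Bool} (h : ∀ b, ν {b} = 2⁻¹) : ν = fairCoin :=
  Measure.ext_of_singleton fun b => by rw [h, fairCoin_singleton]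

lemma coinFlips_cylinder (s : Finset ι) (p : ι → Bool) :
    coinFlips ι {w | ∀ i ∈ s, w i = p i} = 2⁻¹ ^ s.card := by
  have hpi : {w : ι → Bool | ∀ i ∈ s, w i = p i} = (s : Set ι).pi fun i => {p i} := by
    ext w; simp [Set.mem_pi]
  rw [hpi, coinFlips, Measure.infinitePi_pi _ fun i _ => MeasurableSet.singleton _]
  simp [fairCoin_singleton]

lemma measurableSet_coin (i : ι) (b : Bool) : MeasurableSet {w : ι → Bool | w i = b} :=
  measurable_pi_apply (X := fun _ => Bool) i (MeasurableSet.singleton b)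

lemma coinFlips_eq_half (i : ι) (b : Bool) : coinFlips ι {w | w i = b} = 2⁻¹ := by
  simpa using coinFlips_cylinder {i} fun _ => b

lemma eq_coinFlips_nat {ν : Measure (ℕ → Bool)}
    (h : ∀ n (q : ℕ → Bool), ν {f | ∀ i < n, f i = q i} = 2⁻¹ ^ n) : ν = coinFlips ℕ := by
  have h_lim := Measure.isProjectiveLimit_infinitePi fun _ : ℕ => fairCoin
  refine IsProjectiveLimit.unique ?_ h_lim
  rw [isProjectiveLimit_nat_iff (isProjectiveMeasureFamily_pi fun _ : ℕ => fairCoin)]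
  refine fun n => Measure.ext_of_singleton fun q => ?_
  rw [Measure.map_apply (by fun_prop) (MeasurableSet.singleton q), Measure.pi_singleton]
  have h_preimage : Preorder.frestrictLe (π := fun _ => Bool) n ⁻¹' {q} =
      {f : ℕ → Bool | ∀ i < n + 1, f i = if hi : i ∈ Finset.Iic n then q ⟨i, hi⟩ else true} := by
    ext f
    simp +contextual [funext_iff]
  rw [h_preimage, h]
  simp [fairCoin_singleton]

lemma measurePreserving_coinFlips_nat {P : Measure Ω} {Z : Ω → ℕ → Bool} (hZ : Measurable Z)
    (h : ∀ n (q : ℕ → Bool), P {ω | ∀ i < n, Z ω i = q i} = 2⁻¹ ^ n) :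
    MeasurePreserving Z P (coinFlips ℕ) := by
  refine ⟨hZ, eq_coinFlips_nat fun n q => ?_⟩
  rw [Measure.map_apply hZ, ← h n q]
  · rfl
  · measurability

lemma measurable_of_dependsOn [MeasurableSpace β] [Nonempty β] {F : (ι → Bool) → β} {R : Set ι}
    (hR : R.Finite) (hF : DependsOn F R) : Measurable F := by
  have := hR.to_subtype
  obtain ⟨G, rfl⟩ := dependsOn_iff_exists_comp.1 hF
  exact (measurable_of_countable G).comp (measurable_pi_lambda _ fun i => measurable_pi_apply _)

lemma measurableSet_of_dependsOn {E : (ι → Bool) → Prop} {R : Set ι} (hR : R.Finite)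
    (hE : DependsOn E R) : MeasurableSet {w | E w} :=
  measurableSet_setOfPred.2 (measurable_of_dependsOn hR hE)

/-- The bits outside `R` may be replaced by constants, which makes `A` measurable with respect to
the coordinates in `R`. -/
lemma measurableSet_iSup_comap_of_dependsOn {A : Set (ι → Bool)} (hA : MeasurableSet A) {R : Set ι}
    (hR : DependsOn (· ∈ A) R) :
    MeasurableSet[⨆ i ∈ R, MeasurableSpace.comap (fun w : ι → Bool => w i) ⊤] A := by
  set mask : (ι → Bool) → ι → Bool := fun w i => if i ∈ R then w i else false
  have hA_mask : mask ⁻¹' A = A := by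
    ext w
    exact iff_of_eq (hR fun i hi => if_pos hi)
  rw [← hA_mask]
  refine measurableSet_preimage (m := _) (mβ := _) ?_ hA
  refine @measurable_pi_lambda _ _ _ (_) _ _ fun i => ?_
  by_cases hi : i ∈ R
  · simp only [mask, hi, if_true]
    exact measurable_iff_comap_le.2
      (le_iSup₂ (f := fun i _ => MeasurableSpace.comap (fun w : ι → Bool => w i) ⊤) i hi)
  · simp only [mask, hi, if_false]
    exact measurable_const

lemma coinFlips_inter {A B : Set (ι → Bool)} (hA : MeasurableSet A) (hB : MeasurableSet B)
    {R R' : Set ι} (hR : DependsOn (· ∈ A) R) (hR' : DependsOn (· ∈ B) R') (h : Disjoint R R') :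
    coinFlips ι (A ∩ B) = coinFlips ι A * coinFlips ι B := by
  have h_indep : iIndepFun (fun (i : ι) (w : ι → Bool) => w i) (coinFlips ι) :=
    iIndepFun_infinitePi fun _ => measurable_id
  exact (Indep_iff _ _ _).1 (indep_iSup_of_disjoint
      (fun i => (measurable_pi_apply (X := fun _ => Bool) i).comap_le) h_indep h) A B
    (measurableSet_iSup_comap_of_dependsOn hA hR) (measurableSet_iSup_comap_of_dependsOn hB hR')

lemma coinFlips_nat_eq_four_mul {E : (ℕ → Bool) → Prop} {r : ℕ} (hE : DependsOn E (Set.Iio r)) :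
    coinFlips ℕ {f | E f} = 4 * coinFlips ℕ {f | E f ∧ f r = true ∧ f (r + 1) = false} := by
  have h_next : coinFlips ℕ {f | f r = true ∧ f (r + 1) = false} = 2⁻¹ ^ 2 := by
    simpa using coinFlips_cylinder {r, r + 1} fun i => decide (i = r)
  have h_dep : DependsOn (fun f : ℕ → Bool => f r = true ∧ f (r + 1) = false) {r, r + 1} :=
    fun f g h => by simp [h r, h (r + 1)]
  rw [Set.ofPred_and, coinFlips_inter (measurableSet_of_dependsOn (Set.finite_Iio r) hE)
    (measurableSet_of_dependsOn (Set.toFinite _) h_dep) hE h_dep (by simp), h_next,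
    mul_left_comm, ← ENNReal.inv_pow]
  norm_num
  rw [ENNReal.mul_inv_cancel (by simp) (by simp), mul_one]

lemma measurePreserving_decide_eq_one {P : Measure Ω} [IsProbabilityMeasure P] {ξ : ℕ → Ω → ℤ}
    (hξ : ∀ i, Measurable (ξ i)) (h_indep : iIndepFun ξ P) (h_up : ∀ i, P {ω | ξ i ω = 1} = 2⁻¹) :
    MeasurePreserving (fun ω i => decide (ξ i ω = 1)) P (coinFlips ℕ) := by
  have h_decide : Measurable fun z : ℤ => decide (z = 1) := measurable_of_countable _
  have h_meas : ∀ i, Measurable fun ω => decide (ξ i ω = 1) := fun i => h_decide.comp (hξ i)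
  have h_set : ∀ i, MeasurableSet {ω | ξ i ω = 1} := fun i => hξ i (MeasurableSet.singleton 1)
  refine ⟨measurable_pi_lambda _ h_meas, ?_⟩
  rw [(h_indep.comp _ fun _ => h_decide).map_fun_eq_infinitePi_map h_meas, coinFlips]
  congr 1
  refine funext fun i => eq_fairCoin fun b => ?_
  rw [Measure.map_apply (h_meas i) (MeasurableSet.singleton b)]
  cases b
  · have h_compl : (fun ω => decide (ξ i ω = 1)) ⁻¹' {false} = {ω | ξ i ω = 1}ᶜ := by ext; simp
    rw [h_compl, prob_compl_eq_one_sub (h_set i), h_up, ENNReal.one_sub_inv_two]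
  · simpa [Set.preimage] using h_up i

lemma measurePreserving_splice (s : ℕ) : MeasurePreserving (fun p => splice s p.1 p.2)
    ((coinFlips ℕ).prod (coinFlips ℕ)) (coinFlips ℕ) := by
  refine measurePreserving_coinFlips_nat ?_ fun n q => ?_
  · refine measurable_pi_lambda _ fun i => ?_
    by_cases hi : i < s
    · simp only [splice, hi, if_true]; fun_prop
    · simp only [splice, hi, if_false]; fun_prop
  have h_prod : {p : (ℕ → Bool) × (ℕ → Bool) | ∀ i < n, splice s p.1 p.2 i = q i} =
      {f | ∀ i ∈ Finset.range (min n s), f i = q i} ×ˢ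
        {g | ∀ i ∈ Finset.range (n - s), g i = q (s + i)} := by
    ext ⟨f, g⟩
    simp only [Set.mem_prod, Set.mem_ofPred_eq, Finset.mem_range]
    refine ⟨fun h => ⟨fun i hi => ?_, fun i hi => ?_⟩, fun ⟨h_f, h_g⟩ i hi => ?_⟩
    · rw [← h i (by omega), splice_of_lt f g s (by omega)]
    · rw [← h (s + i) (by omega), splice_add]
    · rcases lt_or_ge i s with his | his
      · rw [splice_of_lt f g s his, h_f i (by omega)]
      · obtain ⟨i, rfl⟩ := Nat.exists_eq_add_of_le his
        rw [splice_add, h_g i (by omega)]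
  rw [h_prod, Measure.prod_prod, coinFlips_cylinder, coinFlips_cylinder _ fun i => q (s + i),
    ← pow_add, Finset.card_range, Finset.card_range]
  congr 1
  omega

end CoinFlips

section StackLaw

variable (x₀ : ℤ) (b : Bool) (z : ℤ) (n k : ℕ)

lemma dependsOn_departures (t : ℕ) : DependsOn (fun f => departures x₀ f t z) (Set.Iio t) := by
  intro f g h
  refine congrArg Finset.card (Finset.filter_congr fun k hk => ?_)
  rw [show walk x₀ f k = walk x₀ g k from
    dependsOn_walk x₀ k fun i hi => h i (hi.trans (Finset.mem_range.1 hk))]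

lemma measurable_stackSteps : Measurable (stackSteps x₀) := by
  have h_eval : Measurable fun p : (ℤ × ℕ → Bool) × (ℤ × ℕ) => p.1 p.2 :=
    measurable_from_prod_countable_left fun i => measurable_pi_apply i
  have h_eval' : Measurable fun p : (ℤ → ℕ) × ℤ => p.1 p.2 :=
    measurable_from_prod_countable_left fun i => measurable_pi_apply i
  have h_arrow : ∀ t, Measurable (stackState x₀ · t) → Measurable (stackSteps x₀ · t) :=
    fun t ht => h_eval.comp (measurable_id.prodMk
      (ht.fst.prodMk (h_eval'.comp (ht.snd.prodMk ht.fst))))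
  have h_state : ∀ t, Measurable (stackState x₀ · t) := fun t => by
    induction t with
    | zero => exact measurable_const
    | succ t ih =>
      refine (ih.fst.add ((measurable_of_countable step).comp (h_arrow t ih))).prodMk
        (measurable_pi_lambda _ fun z => ?_)
      exact ((measurable_pi_apply z).comp ih.snd).add
        ((measurable_of_countable fun y : ℤ => if y = z then 1 else 0).comp ih.fst)
  exact measurable_pi_lambda _ fun t => h_arrow t (h_state t)

lemma stackSteps_prefix_iff (w : ℤ × ℕ → Bool) (q : ℕ → Bool) :
    (∀ i < n, stackSteps x₀ w i = q i) ↔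
      ∀ i < n, w (walk x₀ q i, departures x₀ q i (walk x₀ q i)) = q i := by
  have h_arrow : ∀ i, (∀ j < i, stackSteps x₀ w j = q j) →
      stackSteps x₀ w i = w (walk x₀ q i, departures x₀ q i (walk x₀ q i)) := fun i hi => by
    rw [follows_stackSteps x₀ w i, show walk x₀ _ i = walk x₀ q i from dependsOn_walk x₀ i hi,
      show departures x₀ _ i _ = departures x₀ q i _ from dependsOn_departures x₀ _ i hi]
  refine ⟨fun h i hi => ?_, fun h i => ?_⟩
  · rw [← h_arrow i fun j hj => h j (hj.trans hi), h i hi]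
  · induction i using Nat.strong_induction_on with
    | _ i ih => exact fun hi => (h_arrow i fun j hj => ih j hj (hj.trans hi)).trans (h i hi)

lemma injective_walk_departures (q : ℕ → Bool) :
    Function.Injective fun i => (walk x₀ q i, departures x₀ q i (walk x₀ q i)) := by
  refine Function.Injective.of_lt_imp_ne fun i j hij h => ?_
  obtain ⟨h_walk, h_dep⟩ := Prod.mk.inj h
  have h_mono := departures_mono x₀ q (walk x₀ q i) (Nat.succ_le_of_lt hij)
  simp only [departures_succ, if_true] at h_mono
  rw [← h_walk] at h_dep
  omega

lemma measurePreserving_stackSteps :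
    MeasurePreserving (stackSteps x₀) (coinFlips (ℤ × ℕ)) (coinFlips ℕ) := by
  refine measurePreserving_coinFlips_nat (measurable_stackSteps x₀) fun n q => ?_
  have h_inj := injective_walk_departures x₀ q
  set address := fun i => (walk x₀ q i, departures x₀ q i (walk x₀ q i))
  have h_cylinder : {w | ∀ i < n, stackSteps x₀ w i = q i} =
      {w | ∀ p ∈ (Finset.range n).image address, w p = Function.extend address q default p} := by
    ext w
    simp only [Set.mem_ofPred_eq, stackSteps_prefix_iff, Finset.forall_mem_image, Finset.mem_range,
      h_inj.extend_apply, address]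
  rw [h_cylinder, coinFlips_cylinder, Finset.card_image_of_injective _ h_inj, Finset.card_range]

lemma dependsOn_arrowCount :
    DependsOn (fun w => arrowCount b w z n) ({z} ×ˢ Set.Iio n) := by
  intro w w' h
  refine congrArg Finset.card (Finset.filter_congr fun i hi => ?_)
  rw [h (z, i) ⟨rfl, Finset.mem_range.1 hi⟩]

lemma dependsOn_arrowCount_row : DependsOn (fun w => arrowCount b w z n) {p | p.1 = z} :=
  (dependsOn_arrowCount b z n).mono fun _ hp => hp.1

lemma measurable_arrowCount : Measurable fun w => arrowCount b w z n :=
  measurable_of_dependsOn ((Set.finite_singleton z).prod (Set.finite_Iio n))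
    (dependsOn_arrowCount b z n)

lemma measurableSet_arrowCount (p : ℕ → Prop) : MeasurableSet {w | p (arrowCount b w z n)} :=
  measurable_arrowCount b z n (MeasurableSet.of_discrete (s := {m | p m}))

lemma coinFlips_arrowCount_inter_arrow (b' : Bool) :
    coinFlips (ℤ × ℕ) ({w | arrowCount b w z n = k} ∩ {w | w (z, n) = b'}) =
      coinFlips (ℤ × ℕ) {w | arrowCount b w z n = k} * 2⁻¹ := by
  rw [coinFlips_inter (measurableSet_arrowCount b z n (· = k)) (measurableSet_coin (z, n) b')
    (R := {z} ×ˢ Set.Iio n) (R' := {(z, n)}), coinFlips_eq_half]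
  · exact fun w w' h => congrArg (· = k) (dependsOn_arrowCount b z n h)
  · exact fun w w' h => congrArg (· = b') (h (z, n) rfl)
  · simp

lemma coinFlips_arrowCount_eq :
    coinFlips (ℤ × ℕ) {w | arrowCount b w z n = k} = ENNReal.ofReal (binomialProb n k) := by
  induction n generalizing k with
  | zero => cases k <;> simp [binomialProb]
  | succ n ih =>
    have h_half : ∀ r : ℝ, 0 ≤ r → ENNReal.ofReal r * 2⁻¹ = ENNReal.ofReal (r / 2) := fun r _ => by
      rw [ENNReal.ofReal_div_of_pos two_pos, div_eq_mul_inv, ENNReal.ofReal_ofNat]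
    rw [← measure_inter_add_sdiff _ (measurableSet_coin (z, n) b)]
    have h_other : {w | arrowCount b w z (n + 1) = k} \ {w | w (z, n) = b} =
        {w | arrowCount b w z n = k} ∩ {w | w (z, n) = !b} := by
      ext w
      simp +contextual [arrowCount_succ, ← Bool.eq_not, and_congr_left_iff]
    rw [h_other, coinFlips_arrowCount_inter_arrow, ih]
    cases k with
    | zero =>
      have h_same : {w | arrowCount b w z (n + 1) = 0} ∩ {w | w (z, n) = b} = ∅ := by
        ext w
        simp +contextual [arrowCount_succ]
      rw [h_same, measure_empty, zero_add, h_half _ (binomialProb_nonneg n 0),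
        binomialProb_zero_succ]
    | succ k =>
      have h_same : {w | arrowCount b w z (n + 1) = k + 1} ∩ {w | w (z, n) = b} =
          {w | arrowCount b w z n = k} ∩ {w | w (z, n) = b} := by
        ext w
        simp +contextual [arrowCount_succ, and_congr_left_iff]
      rw [h_same, coinFlips_arrowCount_inter_arrow, ih, h_half _ (binomialProb_nonneg _ _),
        h_half _ (binomialProb_nonneg _ _), binomialProb_succ_succ, ENNReal.ofReal_add]
      all_goals linarith [binomialProb_nonneg n k, binomialProb_nonneg n (k + 1)]

lemma coinFlips_le_arrowCount :
    coinFlips (ℤ × ℕ) {w | k ≤ arrowCount b w z n} = ENNReal.ofReal (binomialTail n k) := by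
  have h_le : ∀ w, arrowCount b w z n ≤ n := fun w => by
    rw [arrowCount]
    simpa using Finset.card_filter_le (Finset.range n) fun i => w (z, i) = b
  have h_union : {w | k ≤ arrowCount b w z n} =
      ⋃ i ∈ Finset.Icc k n, {w | arrowCount b w z n = i} := by
    ext w
    simp [h_le]
  rw [h_union, measure_biUnion_finset, binomialTail,
    ENNReal.ofReal_sum_of_nonneg fun i _ => binomialProb_nonneg n i]
  · exact Finset.sum_congr rfl fun i _ => coinFlips_arrowCount_eq b z n i
  · exact fun i _ j _ hij => Set.disjoint_left.2 fun w hi hj => hij (hi.symm.trans hj)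
  · exact fun i _ => measurableSet_arrowCount b z n (· = i)

end StackLaw

section Saturation

variable (x₀ : ℤ) (n : ℤ → ℕ) (R : Set ℤ) (j : ℕ)

/-- The walk sits at time `t` at `z`, whose local time equals its capacity `n z`, while no site is
above its capacity. -/
def SaturatesFirstAt (z : ℤ) (t : ℕ) (f : ℕ → Bool) : Prop :=
  walk x₀ f t = z ∧ visits x₀ f t z = n z ∧ ∀ y, visits x₀ f t y ≤ n y

/-- The walk sits at time `t` at `x`, the sites `x`, `x + 1`, `x + 2` are all filled to their
capacities, and no site is above its capacity. -/
def TieAt (x : ℤ) (t : ℕ) (f : ℕ → Bool) : Prop :=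
  walk x₀ f t = x ∧ visits x₀ f t x = n x ∧ visits x₀ f t (x + 1) = n (x + 1) ∧
    visits x₀ f t (x + 2) = n (x + 2) ∧ ∀ y, visits x₀ f t y ≤ n y

/-- The number of departures from `z` that the capacity `n z` allows. Departures and local times
differ by one at the starting point, as time `0` does not count as a visit. -/
def departureCapacity (z : ℤ) : ℕ := n z + if x₀ = z then 1 else 0

/-- The bounds `D` on the departures from the sites of `R` respect the capacities and dominate the
arrivals they allow, when `j` arrivals come from outside `R`. It is used for half-lines, where only
one site of `R` has a neighbour outside. -/
def IsAbsorbing (w : ℤ × ℕ → Bool) (D : ℤ → ℕ) : Prop :=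
  ∀ z ∈ R, D z ≤ departureCapacity x₀ n z ∧
    (if z - 1 ∈ R then arrowCount true w (z - 1) (D (z - 1)) else j) +
      (if z + 1 ∈ R then arrowCount false w (z + 1) (D (z + 1)) else j) +
      (if x₀ = z then 1 else 0) ≤ D z

/-- The stacks over `R` send `j` arrivals from outside back out of `R` within the capacities. -/
def Absorbs (w : ℤ × ℕ → Bool) : Prop := ∃ D : ℤ →₀ ℕ, IsAbsorbing x₀ n R j w D

lemma dependsOn_saturatesFirstAt (z : ℤ) (t : ℕ) :
    DependsOn (SaturatesFirstAt x₀ n z t) (Set.Iio t) := by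
  intro f g h
  have h_walk : walk x₀ f t = walk x₀ g t := dependsOn_walk x₀ t h
  have h_visits : ∀ y, visits x₀ f t y = visits x₀ g t y := fun y => dependsOn_visits x₀ t y h
  simp only [SaturatesFirstAt, h_walk, h_visits]

lemma dependsOn_tieAt (x : ℤ) (t : ℕ) : DependsOn (TieAt x₀ n x t) (Set.Iio t) := by
  intro f g h
  have h_walk : walk x₀ f t = walk x₀ g t := dependsOn_walk x₀ t h
  have h_visits : ∀ y, visits x₀ f t y = visits x₀ g t y := fun y => dependsOn_visits x₀ t y h
  simp only [TieAt, h_walk, h_visits]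

lemma dependsOn_absorbs : DependsOn (Absorbs x₀ n R j) {p | p.1 ∈ R} := by
  intro w w' h
  have h_count : ∀ b, ∀ z ∈ R, ∀ k, arrowCount b w z k = arrowCount b w' z k := fun b z hz k =>
    dependsOn_arrowCount_row b z k fun p (hp : p.1 = z) =>
      h p (show p.1 ∈ R from hp.symm ▸ hz)
  simp only [Absorbs, IsAbsorbing]
  refine propext (exists_congr fun D => forall₂_congr fun z _ => ?_)
  by_cases h₁ : z - 1 ∈ R <;> by_cases h₂ : z + 1 ∈ R <;> simp [h₁, h₂, h_count]

lemma measurableSet_absorbs : MeasurableSet {w | Absorbs x₀ n R j w} := by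
  simp only [Absorbs, IsAbsorbing, Set.ofPred_exists, Set.ofPred_forall, Set.ofPred_and]
  refine MeasurableSet.iUnion fun D => MeasurableSet.iInter fun z => MeasurableSet.iInter fun _ =>
    (MeasurableSet.const _).inter (measurableSet_le ?_ measurable_const)
  refine Measurable.add (Measurable.add ?_ ?_) measurable_const
  all_goals split_ifs
  all_goals first | exact measurable_arrowCount _ _ _ | exact measurable_const

variable {x₀ n R j} {w : ℤ × ℕ → Bool} {f : ℕ → Bool} {t : ℕ}

lemma visits_le_iff {z : ℤ} : visits x₀ f t z ≤ n z ↔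
    departures x₀ f t z + (if walk x₀ f t = z then 1 else 0) ≤ departureCapacity x₀ n z := by
  rw [← visits_add_eq_departures_add, departureCapacity]
  exact (add_le_add_iff_right _).symm

lemma visits_eq_iff {z : ℤ} : visits x₀ f t z = n z ↔
    departures x₀ f t z + (if walk x₀ f t = z then 1 else 0) = departureCapacity x₀ n z := by
  rw [← visits_add_eq_departures_add, departureCapacity]
  exact add_left_inj _ |>.symm

lemma Follows.exists_saturatesFirstAt (hf : Follows x₀ w f) {e : ℤ} {D : ℤ →₀ ℕ}
    (hD_le : ∀ z, D z ≤ departureCapacity x₀ n z) (he : D e + 1 = departureCapacity x₀ n e)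
    (hD : ∀ z, z ≠ e → CannotOverflow x₀ w D z) : ∃ t, SaturatesFirstAt x₀ n e t f := by
  obtain ⟨t, h_walk, h_eq, h_le⟩ := hf.exists_departures_eq_bound e D hD
  refine ⟨t, h_walk, visits_eq_iff.2 (by rw [if_pos h_walk, h_eq, he]), fun y => visits_le_iff.2 ?_⟩
  split_ifs with hy
  · rw [← hy, h_walk, h_eq, he]
  · exact (h_le y).trans (hD_le y)

lemma Follows.absorbs (hf : Follows x₀ w f) (h_le : ∀ z, visits x₀ f t z ≤ n z)
    (h_walk : walk x₀ f t ∉ R)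
    (h_left : ∀ z ∈ R, z - 1 ∉ R → arrowCount true w (z - 1) (departures x₀ f t (z - 1)) = j)
    (h_right : ∀ z ∈ R, z + 1 ∉ R → arrowCount false w (z + 1) (departures x₀ f t (z + 1)) = j) :
    Absorbs x₀ n R j w := by
  refine ⟨Finsupp.ofSupportFinite _ (finite_support_departures x₀ f t), fun z hz => ⟨?_, ?_⟩⟩
  · exact (Nat.le_add_right _ _).trans (visits_le_iff.1 (h_le z))
  · have h_arr := hf.arrivals t z
    rw [if_neg fun h : walk x₀ f t = z => h_walk (h ▸ hz)] at h_arr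
    rw [Finsupp.ofSupportFinite_coe, ite_eq_left_iff.2 fun h => (h_left z hz h).symm,
      ite_eq_left_iff.2 fun h => (h_right z hz h).symm]
    exact h_arr.ge

lemma IsAbsorbing.cannotOverflow {D D' : ℤ → ℕ} (hD : IsAbsorbing x₀ n R j w D)
    (h_eq : ∀ z ∈ R, D' z = D z) {z : ℤ} (hz : z ∈ R)
    (h_left : z - 1 ∉ R → arrowCount true w (z - 1) (D' (z - 1)) ≤ j)
    (h_right : z + 1 ∉ R → arrowCount false w (z + 1) (D' (z + 1)) ≤ j) :
    CannotOverflow x₀ w D' z := by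
  refine .inl (le_trans (add_le_add_left (add_le_add ?_ ?_) _) (h_eq z hz ▸ (hD z hz).2))
  · split_ifs with h
    · rw [h_eq _ h]
    · exact h_left h
  · split_ifs with h
    · rw [h_eq _ h]
    · exact h_right h

lemma exists_finsupp_glue {M : Type*} [Zero M] (u v : ℤ →₀ M) (d : ℤ → M) {a b : ℤ}
    (hab : a ≤ b) :
    ∃ D : ℤ →₀ M, (∀ z, z < a → D z = u z) ∧ (∀ z, b < z → D z = v z) ∧
      ∀ z, a ≤ z → z ≤ b → D z = d z := by
  set D : ℤ → M := fun z => if z < a then u z else if b < z then v z else d z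
  have D_left : ∀ z, z < a → D z = u z := fun z hz => if_pos hz
  have D_right : ∀ z, b < z → D z = v z := fun z hz => (if_neg (by omega)).trans (if_pos hz)
  have D_mid : ∀ z, a ≤ z → z ≤ b → D z = d z := fun z ha hb =>
    (if_neg (by omega)).trans (if_neg (by omega))
  have D_finite : (Function.support D).Finite := by
    refine ((u.hasFiniteSupport.union v.hasFiniteSupport).union (Set.finite_Icc a b)).subset ?_
    intro z hz
    rcases (by omega : z < a ∨ b < z ∨ (a ≤ z ∧ z ≤ b)) with ha | hb | hz'
    · exact .inl (.inl (D_left z ha ▸ hz : u z ≠ 0))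
    · exact .inl (.inr (D_right z hb ▸ hz : v z ≠ 0))
    · exact .inr hz'
  exact ⟨Finsupp.ofSupportFinite D D_finite, D_left, D_right, D_mid⟩

/-- The bounds of the two half-lines are glued to bounds `d` on `[a, b]`. -/
lemma Follows.exists_saturatesFirstAt_of_absorbs (hf : Follows x₀ w f) {a b e : ℤ}
    (he : e ∈ Set.Icc a b) (d : ℤ → ℕ) {i j : ℕ} (h_left : Absorbs x₀ n (Set.Iio a) i w)
    (h_right : Absorbs x₀ n (Set.Ioi b) j w) (hi : arrowCount false w a (d a) ≤ i)
    (hj : arrowCount true w b (d b) ≤ j) (hd : ∀ z ∈ Set.Icc a b, d z ≤ departureCapacity x₀ n z)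
    (hde : d e + 1 = departureCapacity x₀ n e)
    (h_mid : ∀ z ∈ Set.Icc a b, z ≠ e →
      (a < z ∧ arrowCount true w (z - 1) (d (z - 1)) + (if z ≤ x₀ then 1 else 0) ≤
        arrowCount false w z (d z)) ∨
      (z < b ∧ arrowCount false w (z + 1) (d (z + 1)) + (if x₀ ≤ z then 1 else 0) ≤
        arrowCount true w z (d z))) :
    ∃ t, SaturatesFirstAt x₀ n e t f := by
  obtain ⟨Dl, hDl⟩ := h_left
  obtain ⟨Dr, hDr⟩ := h_right
  have hab : a ≤ b := he.1.trans he.2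
  obtain ⟨D, D_left, D_right, D_mid⟩ := exists_finsupp_glue Dl Dr d hab
  have h_cases : ∀ z, z < a ∨ b < z ∨ (a ≤ z ∧ z ≤ b) := fun z => by omega
  refine hf.exists_saturatesFirstAt (D := D) (fun z => ?_)
    ((congrArg (· + 1) (D_mid e he.1 he.2)).trans hde) fun z hz => ?_
  · rcases h_cases z with ha | hb | hz'
    · exact D_left z ha ▸ (hDl z ha).1
    · exact D_right z hb ▸ (hDr z hb).1
    · exact D_mid z hz'.1 hz'.2 ▸ hd z hz'
  · rcases h_cases z with ha | hb | hz'
    · refine hDl.cannotOverflow D_left ha (fun h => absurd (by simp; omega) h) fun h => ?_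
      rwa [show z + 1 = a by simp at h; omega, D_mid a le_rfl hab]
    · refine hDr.cannotOverflow D_right hb (fun h => ?_) fun h => absurd (by simp; omega) h
      rwa [show z - 1 = b by simp at h; omega, D_mid b hab le_rfl]
    · rcases h_mid z hz' hz with ⟨h, h'⟩ | ⟨h, h'⟩
      · rw [← D_mid z hz'.1 hz'.2, ← D_mid (z - 1) (by omega) (by omega)] at h'
        exact .inr (.inl h')
      · rw [← D_mid z hz'.1 hz'.2, ← D_mid (z + 1) (by omega) (by omega)] at h'
        exact .inr (.inr h')

end Saturation

section Ties

variable (x₀ : ℤ) (n : ℤ → ℕ) (x : ℤ)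

/-- The arrow counts of a tie at `x`: of the arrows used there are `i` down and `u₁` up at `x`,
`u₂` up at `x + 1` and `u₃` up at `x + 2`; the down counts follow from the crossing balance. -/
structure IsTieBalance (i u₁ u₂ u₃ : ℕ) : Prop where
  capacity_left : departureCapacity x₀ n x = i + u₁ + 1
  capacity_mid : departureCapacity x₀ n (x + 1) = u₁ + (if x + 1 ≤ x₀ then 1 else 0) + u₂
  capacity_right : departureCapacity x₀ n (x + 2) = u₂ + (if x + 2 ≤ x₀ then 1 else 0) + u₃

/-- The arrow stacks show a tie at `x` with arrow counts `i`, `u₁`, `u₂`, `u₃`. The last arrow used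
at `x + 2` points down. -/
structure IsTieProfile (i u₁ u₂ u₃ : ℕ) (w : ℤ × ℕ → Bool) : Prop where
  absorbs_left : Absorbs x₀ n (Set.Iio x) i w
  absorbs_right : Absorbs x₀ n (Set.Ioi (x + 2)) u₃ w
  up_left : arrowCount true w x (i + u₁) = u₁
  up_mid : arrowCount true w (x + 1) (departureCapacity x₀ n (x + 1)) = u₂
  up_right : arrowCount true w (x + 2) (departureCapacity x₀ n (x + 2)) = u₃
  up_right_pred : arrowCount true w (x + 2) (departureCapacity x₀ n (x + 2) - 1) = u₃

/-- The half-lines on both sides of `{x, x + 1, x + 2}` absorb `i` and `j` arrivals, and `u` of the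
first `k` arrows at `z` point up. -/
def flankEvent (i j : ℕ) (z : ℤ) (k u : ℕ) : Set (ℤ × ℕ → Bool) :=
  {w | Absorbs x₀ n (Set.Iio x) i w ∧ Absorbs x₀ n (Set.Ioi (x + 2)) j w ∧
    arrowCount true w z k = u}

lemma dependsOn_flankEvent (i j : ℕ) (z : ℤ) (k u : ℕ) :
    DependsOn (· ∈ flankEvent x₀ n x i j z k u) {p | p.1 < x ∨ x + 2 < p.1 ∨ p.1 = z} := by
  intro w w' h
  have h_left := dependsOn_absorbs x₀ n (Set.Iio x) i fun p hp => h p (.inl hp)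
  have h_right := dependsOn_absorbs x₀ n (Set.Ioi (x + 2)) j fun p hp => h p (.inr (.inl hp))
  have h_count := dependsOn_arrowCount_row true z k fun p hp => h p (.inr (.inr hp))
  simp only at h_count
  simp only [flankEvent, Set.mem_ofPred_eq, h_left, h_right, h_count]

lemma measurableSet_flankEvent (i j : ℕ) (z : ℤ) (k u : ℕ) :
    MeasurableSet (flankEvent x₀ n x i j z k u) :=
  (measurableSet_absorbs x₀ n _ i).inter
    ((measurableSet_absorbs x₀ n _ j).inter (measurableSet_arrowCount true z k (· = u)))

variable {x₀ n x} {w : ℤ × ℕ → Bool} {f : ℕ → Bool} {t : ℕ}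

lemma TieAt.departures_left (h : TieAt x₀ n x t f) :
    departures x₀ f t x + 1 = departureCapacity x₀ n x := by
  simpa [h.1] using visits_eq_iff.1 h.2.1

lemma TieAt.departures_mid (h : TieAt x₀ n x t f) :
    departures x₀ f t (x + 1) = departureCapacity x₀ n (x + 1) := by
  simpa [h.1] using visits_eq_iff.1 h.2.2.1

lemma TieAt.departures_right (h : TieAt x₀ n x t f) :
    departures x₀ f t (x + 2) = departureCapacity x₀ n (x + 2) := by
  simpa [h.1] using visits_eq_iff.1 h.2.2.2.1

lemma TieAt.exists_isTieProfile (hf : Follows x₀ w f) (hn : 1 ≤ n (x + 2))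
    (h : TieAt x₀ n x t f) :
    ∃ i u₁ u₂ u₃, IsTieBalance x₀ n x i u₁ u₂ u₃ ∧ IsTieProfile x₀ n x i u₁ u₂ u₃ w := by
  have h_dep := h.departures_left
  have h_dep₁ := h.departures_mid
  have h_dep₂ := h.departures_right
  have h_flow := hf.flow t x
  have h_flow₁ := hf.flow t (x + 1)
  rw [add_assoc, one_add_one_eq_two] at h_flow₁
  have h_last := hf.last_arrow_down (t := t) (z := x + 2) (by rw [h.1]; omega)
    (by rw [h_dep₂, departureCapacity]; omega)
  have h_sum := arrowCount_true_add_false w x (departures x₀ f t x)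
  have h_sum₁ := arrowCount_true_add_false w (x + 1) (departures x₀ f t (x + 1))
  have h_sum₂ := arrowCount_true_add_false w (x + 2) (departures x₀ f t (x + 2))
  rw [h.1, if_pos (by omega)] at h_flow h_flow₁
  refine ⟨arrowCount false w x (departures x₀ f t x), arrowCount true w x (departures x₀ f t x),
    arrowCount true w (x + 1) (departures x₀ f t (x + 1)),
    arrowCount true w (x + 2) (departures x₀ f t (x + 2)),
    ⟨by omega, by split_ifs at h_flow ⊢ <;> omega, by split_ifs at h_flow₁ ⊢ <;> omega⟩,
    ⟨?_, ?_, ?_, by rw [h_dep₁], by rw [h_dep₂], ?_⟩⟩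
  · refine hf.absorbs h.2.2.2.2 (by simp [h.1]) (fun z hz hz' => ?_) fun z hz hz' => ?_
    · simp at hz hz'; omega
    · rw [show z + 1 = x by simp at hz hz'; omega]
  · refine hf.absorbs h.2.2.2.2 (by simp [h.1]) (fun z hz hz' => ?_) fun z hz hz' => ?_
    · rw [show z - 1 = x + 2 by simp at hz hz'; omega]
    · simp at hz hz'; omega
  · rw [add_comm, h_sum]
  · rw [← h_dep₂, h_last]

lemma coinFlips_inter_rows {O : Set (ℤ × ℕ → Bool)} (hO : MeasurableSet O) {y y' : ℤ} (hy : y ≠ y')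
    (hO' : DependsOn (· ∈ O) {p | p.1 ≠ y ∧ p.1 ≠ y'}) (b b' : Bool) (k k' : ℕ) (p p' : ℕ → Prop) :
    coinFlips (ℤ × ℕ) (O ∩ ({w | p (arrowCount b w y k)} ∩ {w | p' (arrowCount b' w y' k')})) =
      coinFlips (ℤ × ℕ) O * (coinFlips (ℤ × ℕ) {w | p (arrowCount b w y k)} *
        coinFlips (ℤ × ℕ) {w | p' (arrowCount b' w y' k')}) := by
  have h_row : ∀ (b : Bool) z k (p : ℕ → Prop),
      DependsOn (· ∈ {w | p (arrowCount b w z k)}) {q : ℤ × ℕ | q.1 = z} := fun b z k p w w' h =>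
    congrArg p (dependsOn_arrowCount_row b z k h)
  have h_rows : DependsOn (· ∈ {w | p (arrowCount b w y k)} ∩ {w | p' (arrowCount b' w y' k')})
      {q : ℤ × ℕ | q.1 = y ∨ q.1 = y'} := fun w w' h =>
    congrArg₂ And (h_row b y k p fun q hq => h q (.inl hq))
      (h_row b' y' k' p' fun q hq => h q (.inr hq))
  have hE := measurableSet_arrowCount b y k p
  have hE' := measurableSet_arrowCount b' y' k' p'
  rw [coinFlips_inter hO (hE.inter hE') hO' h_rows, coinFlips_inter hE hE' (h_row _ _ _ _)
    (h_row _ _ _ _)]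
  · exact Set.disjoint_left.2 fun q (hq : q.1 = y) (hq' : q.1 = y') => hy (hq.symm.trans hq')
  · exact Set.disjoint_left.2 fun q hq hq' => hq'.elim hq.1 hq.2

lemma exists_coinFlips_inter_rows_le {O : Set (ℤ × ℕ → Bool)} (hO : MeasurableSet O) {y y' : ℤ}
    (hy : y ≠ y') (hO' : DependsOn (· ∈ O) {p | p.1 ≠ y ∧ p.1 ≠ y'}) (β : Bool) {a b o c k : ℕ}
    (hab : a ≤ b) (hb : 1 ≤ b) (ho : o ≤ 1) (hk : b + c ≤ k + 1) (hk' : k ≤ b + c + 1) :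
    ∃ e ≤ b, coinFlips (ℤ × ℕ)
        (O ∩ ({w | arrowCount β w y (a + b) = a} ∩ {w | arrowCount (!β) w y' k = c})) ≤
      ENNReal.ofReal (512 / b) * coinFlips (ℤ × ℕ)
        (O ∩ ({w | a ≤ arrowCount β w y (a + e)} ∩
          {w | e + o ≤ arrowCount β w y' (e + o + c)})) := by
  obtain ⟨e, he, h⟩ := exists_prob_mul_prob_le_tail_mul_tail hab hb ho hk hk'
  refine ⟨e, he, ?_⟩
  rw [coinFlips_inter_rows hO hy hO' β (!β) _ _ (· = a) (· = c),
    coinFlips_inter_rows hO hy hO' β β _ _ (a ≤ ·) (e + o ≤ ·), coinFlips_arrowCount_eq,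
    coinFlips_arrowCount_eq, coinFlips_le_arrowCount, coinFlips_le_arrowCount,
    mul_left_comm (ENNReal.ofReal (512 / b)),
    ← ENNReal.ofReal_mul (binomialProb_nonneg _ _), ← ENNReal.ofReal_mul (binomialTail_nonneg _ _),
    ← ENNReal.ofReal_mul (by positivity)]
  gcongr

lemma IsTieBalance.exists_saturatesFirstAt_left {i u₁ u₂ u₃ e : ℕ}
    (h : IsTieBalance x₀ n x i u₁ u₂ u₃) (hf : Follows x₀ w f) (he : e ≤ u₂)
    (h_flank : w ∈ flankEvent x₀ n x i u₃ x (i + u₁) u₁)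
    (h_mid : u₁ + (if x + 1 ≤ x₀ then 1 else 0) ≤
      arrowCount false w (x + 1) (u₁ + (if x + 1 ≤ x₀ then 1 else 0) + e))
    (h_right : e + (if x + 2 ≤ x₀ then 1 else 0) ≤
      arrowCount false w (x + 2) (e + (if x + 2 ≤ x₀ then 1 else 0) + u₃)) :
    ∃ t, SaturatesFirstAt x₀ n x t f := by
  obtain ⟨h₀, h₁, h₂⟩ := h
  obtain ⟨h_absorbs, h_absorbs', h_up⟩ := h_flank
  have h_sum := arrowCount_true_add_false w x (i + u₁)
  have h_sum₁ := arrowCount_true_add_false w (x + 1)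
    (u₁ + (if x + 1 ≤ x₀ then 1 else 0) + e)
  have h_sum₂ := arrowCount_true_add_false w (x + 2)
    (e + (if x + 2 ≤ x₀ then 1 else 0) + u₃)
  set d : ℤ → ℕ := fun z => if z = x then i + u₁ else if z = x + 1 then
    u₁ + (if x + 1 ≤ x₀ then 1 else 0) + e else e + (if x + 2 ≤ x₀ then 1 else 0) + u₃ with hd
  have d₀ : d x = i + u₁ := by simp [hd]
  have d₁ : d (x + 1) = u₁ + (if x + 1 ≤ x₀ then 1 else 0) + e := by simp [hd]
  have d₂ : d (x + 2) = e + (if x + 2 ≤ x₀ then 1 else 0) + u₃ := by simp [hd]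
  rw [← d₀] at h_sum h_up
  rw [← d₁] at h_mid h_sum₁
  rw [← d₂] at h_right h_sum₂
  refine hf.exists_saturatesFirstAt_of_absorbs (a := x) (b := x + 2) (by simp) d h_absorbs
    h_absorbs' (by omega) (by omega) (fun z hz => ?_) (by omega) fun z hz hzx => .inl ⟨?_, ?_⟩
  · obtain rfl | rfl | rfl : z = x ∨ z = x + 1 ∨ z = x + 2 := by simp at hz; omega
    all_goals omega
  · exact lt_of_le_of_ne hz.1 hzx.symm
  · obtain rfl | rfl : z = x + 1 ∨ z = x + 2 := by simp at hz; omega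
    · rw [add_sub_cancel_right]; omega
    · rw [show x + 2 - 1 = x + 1 by ring]; omega

lemma IsTieBalance.exists_saturatesFirstAt_right {i u₁ u₂ u₃ e : ℕ}
    (h : IsTieBalance x₀ n x i u₁ u₂ u₃) (hf : Follows x₀ w f)
    (he : e ≤ u₁ + if x + 1 ≤ x₀ then 1 else 0) (hn : 1 ≤ departureCapacity x₀ n (x + 2))
    (h_flank : w ∈ flankEvent x₀ n x i u₃ (x + 2) (departureCapacity x₀ n (x + 2) - 1) u₃)
    (h_mid : u₂ ≤ arrowCount true w (x + 1) (u₂ + e))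
    (h_left : e + (if x₀ ≤ x then 1 else 0) ≤
      arrowCount true w x (e + (if x₀ ≤ x then 1 else 0) + i)) :
    ∃ t, SaturatesFirstAt x₀ n (x + 2) t f := by
  obtain ⟨h₀, h₁, h₂⟩ := h
  obtain ⟨h_absorbs, h_absorbs', h_up⟩ := h_flank
  have h_side : (if x₀ ≤ x then 1 else 0) + (if x + 1 ≤ x₀ then 1 else 0) = 1 := by
    split_ifs <;> omega
  have h_side₁ : (if x₀ ≤ x + 1 then 1 else 0) + (if x + 2 ≤ x₀ then 1 else 0) = 1 := by
    split_ifs <;> omega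
  have h_sum := arrowCount_true_add_false w x (e + (if x₀ ≤ x then 1 else 0) + i)
  have h_sum₁ := arrowCount_true_add_false w (x + 1) (u₂ + e)
  have h_sum₂ := arrowCount_true_add_false w (x + 2) (departureCapacity x₀ n (x + 2) - 1)
  set d : ℤ → ℕ := fun z => if z = x then e + (if x₀ ≤ x then 1 else 0) + i else if z = x + 1 then
    u₂ + e else departureCapacity x₀ n (x + 2) - 1 with hd
  have d₀ : d x = e + (if x₀ ≤ x then 1 else 0) + i := by simp [hd]
  have d₁ : d (x + 1) = u₂ + e := by simp [hd]
  have d₂ : d (x + 2) = departureCapacity x₀ n (x + 2) - 1 := by simp [hd]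
  rw [← d₀] at h_left h_sum
  rw [← d₁] at h_mid h_sum₁
  rw [← d₂] at h_up h_sum₂
  refine hf.exists_saturatesFirstAt_of_absorbs (a := x) (b := x + 2) (by simp) d h_absorbs
    h_absorbs' (by omega) (by omega) (fun z hz => ?_) (by omega) fun z hz hzx => .inr ⟨?_, ?_⟩
  · obtain rfl | rfl | rfl : z = x ∨ z = x + 1 ∨ z = x + 2 := by simp at hz; omega
    all_goals omega
  · exact lt_of_le_of_ne hz.2 hzx
  · obtain rfl | rfl : z = x ∨ z = x + 1 := by simp at hz; omega
    · omega
    · rw [show x + 1 + 1 = x + 2 by ring]; omega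

/-- The stacks at `x + 1` and `x + 2` are exchanged for ones that make the walk return to `x`. -/
lemma coinFlips_isTieProfile_le_left {i u₁ u₂ u₃ : ℕ} (h : IsTieBalance x₀ n x i u₁ u₂ u₃)
    (h_le : u₁ + (if x + 1 ≤ x₀ then 1 else 0) ≤ u₂) (hu₂ : 1 ≤ u₂) :
    coinFlips (ℤ × ℕ) {w | IsTieProfile x₀ n x i u₁ u₂ u₃ w} ≤
      ENNReal.ofReal (512 / u₂) * coinFlips (ℤ × ℕ)
        ({w | ∃ t, SaturatesFirstAt x₀ n x t (stackSteps x₀ w)} ∩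
          {w | arrowCount true w x (i + u₁) = u₁}) := by
  have h₁ := h.capacity_mid
  have h₂ := h.capacity_right
  have ho : (if x + 2 ≤ x₀ then 1 else 0) ≤ 1 := by split_ifs <;> omega
  obtain ⟨e, he, h_rows⟩ := exists_coinFlips_inter_rows_le
    (measurableSet_flankEvent x₀ n x i u₃ x (i + u₁) u₁) (y := x + 1) (y' := x + 2) (by omega)
    ((dependsOn_flankEvent x₀ n x i u₃ x (i + u₁) u₁).mono fun p hp => by simp at hp ⊢; omega)
    false (c := u₃) (k := departureCapacity x₀ n (x + 2)) h_le hu₂ ho (by omega) (by omega)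
  refine (measure_mono fun w hw => ?_).trans (h_rows.trans
    (mul_le_mul_right (measure_mono fun w hw => ?_) _))
  · have h_mid := arrowCount_true_add_false w (x + 1) (departureCapacity x₀ n (x + 1))
    rw [hw.up_mid] at h_mid
    exact ⟨⟨hw.absorbs_left, hw.absorbs_right, hw.up_left⟩,
      show arrowCount false w (x + 1) _ = _ by rw [← h₁]; omega, hw.up_right⟩
  · obtain ⟨h_flank, h_mid, h_right⟩ := hw
    exact ⟨h.exists_saturatesFirstAt_left (follows_stackSteps x₀ w) he h_flank h_mid h_right,
      h_flank.2.2⟩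

/-- The stacks at `x + 1` and `x` are exchanged for ones that make the walk move to `x + 2`. -/
lemma coinFlips_isTieProfile_le_right {i u₁ u₂ u₃ : ℕ} (h : IsTieBalance x₀ n x i u₁ u₂ u₃)
    (h_le : u₂ ≤ u₁ + if x + 1 ≤ x₀ then 1 else 0)
    (hu₁ : 1 ≤ u₁ + if x + 1 ≤ x₀ then 1 else 0) (hn : 1 ≤ departureCapacity x₀ n (x + 2)) :
    coinFlips (ℤ × ℕ) {w | IsTieProfile x₀ n x i u₁ u₂ u₃ w} ≤
      ENNReal.ofReal (512 / (u₁ + if x + 1 ≤ x₀ then 1 else 0 : ℕ)) * coinFlips (ℤ × ℕ)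
        ({w | ∃ t, SaturatesFirstAt x₀ n (x + 2) t (stackSteps x₀ w)} ∩
          {w | arrowCount true w (x + 2) (departureCapacity x₀ n (x + 2) - 1) = u₃}) := by
  have := h.capacity_left
  have h₁ := h.capacity_mid
  have ho : (if x₀ ≤ x then 1 else 0) ≤ 1 := by split_ifs <;> omega
  obtain ⟨e, he, h_rows⟩ := exists_coinFlips_inter_rows_le
    (measurableSet_flankEvent x₀ n x i u₃ (x + 2) (departureCapacity x₀ n (x + 2) - 1) u₃)
    (y := x + 1) (y' := x) (by omega)
    ((dependsOn_flankEvent x₀ n x i u₃ (x + 2) _ u₃).mono fun p hp => by simp at hp ⊢; omega)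
    true (c := i) (k := i + u₁) h_le hu₁ ho (by split_ifs <;> omega) (by split_ifs <;> omega)
  refine (measure_mono fun w hw => ?_).trans (h_rows.trans
    (mul_le_mul_right (measure_mono fun w hw => ?_) _))
  · have h_left := arrowCount_true_add_false w x (i + u₁)
    rw [hw.up_left] at h_left
    exact ⟨⟨hw.absorbs_left, hw.absorbs_right, hw.up_right_pred⟩,
      show arrowCount true w (x + 1) _ = _ by rw [add_comm u₂, ← h₁, hw.up_mid],
      show arrowCount false w x _ = _ by omega⟩
  · obtain ⟨h_flank, h_mid, h_left⟩ := hw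
    exact ⟨h.exists_saturatesFirstAt_right (follows_stackSteps x₀ w) he hn h_flank h_mid h_left,
      h_flank.2.2⟩

lemma exists_subset_isTieProfile {k : ℕ} (hn : 1 ≤ n (x + 2))
    (hT : ({w | ∃ t, TieAt x₀ n x t (stackSteps x₀ w)} ∩
      {w | arrowCount true w (x + 1) (departureCapacity x₀ n (x + 1)) = k}).Nonempty) :
    ∃ i u₁ u₃, IsTieBalance x₀ n x i u₁ k u₃ ∧
      {w | ∃ t, TieAt x₀ n x t (stackSteps x₀ w)} ∩
        {w | arrowCount true w (x + 1) (departureCapacity x₀ n (x + 1)) = k} ⊆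
          {w | IsTieProfile x₀ n x i u₁ k u₃ w} := by
  set T := {w | ∃ t, TieAt x₀ n x t (stackSteps x₀ w)} ∩
    {w | arrowCount true w (x + 1) (departureCapacity x₀ n (x + 1)) = k}
  have h_profile : ∀ w ∈ T, ∃ i u₁ u₃,
      IsTieBalance x₀ n x i u₁ k u₃ ∧ IsTieProfile x₀ n x i u₁ k u₃ w := by
    rintro w ⟨⟨t, ht⟩, hk : _ = k⟩
    obtain ⟨i, u₁, u₂, u₃, h_bal, h_prof⟩ :=
      ht.exists_isTieProfile (follows_stackSteps x₀ w) hn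
    obtain rfl : u₂ = k := h_prof.up_mid.symm.trans hk
    exact ⟨i, u₁, u₃, h_bal, h_prof⟩
  obtain ⟨w₀, hw₀⟩ := hT
  obtain ⟨i, u₁, u₃, ⟨h₀, h₁, h₂⟩, -⟩ := h_profile w₀ hw₀
  refine ⟨i, u₁, u₃, ⟨h₀, h₁, h₂⟩, fun w hw => ?_⟩
  obtain ⟨i', u₁', u₃', ⟨h₀', h₁', h₂'⟩, h_prof⟩ := h_profile w hw
  obtain rfl : u₁' = u₁ := by omega
  obtain rfl : u₃' = u₃ := by omega
  obtain rfl : i' = i := by omega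
  exact h_prof

lemma coinFlips_tie_inter_le (k : ℕ) {m : ℕ} (hm : 1 ≤ m) (hn : ∀ z, m ≤ n z) :
    coinFlips (ℤ × ℕ) ({w | ∃ t, TieAt x₀ n x t (stackSteps x₀ w)} ∩
        {w | arrowCount true w (x + 1) (departureCapacity x₀ n (x + 1)) = k}) ≤
      ENNReal.ofReal (1024 / m) *
        (coinFlips (ℤ × ℕ) ({w | ∃ t, SaturatesFirstAt x₀ n x t (stackSteps x₀ w)} ∩
            {w | arrowCount true w x (departureCapacity x₀ n x - 1) +
              (if x + 1 ≤ x₀ then 1 else 0) + k = departureCapacity x₀ n (x + 1)}) +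
          coinFlips (ℤ × ℕ) ({w | ∃ t, SaturatesFirstAt x₀ n (x + 2) t (stackSteps x₀ w)} ∩
            {w | k + (if x + 2 ≤ x₀ then 1 else 0) +
              arrowCount true w (x + 2) (departureCapacity x₀ n (x + 2) - 1) =
                departureCapacity x₀ n (x + 2)})) := by
  rcases Set.eq_empty_or_nonempty ({w | ∃ t, TieAt x₀ n x t (stackSteps x₀ w)} ∩
    {w | arrowCount true w (x + 1) (departureCapacity x₀ n (x + 1)) = k}) with hT | hT
  · simp [hT]
  obtain ⟨i, u₁, u₃, h_bal, hT_le⟩ := exists_subset_isTieProfile (hm.trans (hn _)) hT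
  have h₀ := h_bal.capacity_left
  have h₁ := h_bal.capacity_mid
  have h₂ := h_bal.capacity_right
  have hm_le : ∀ z, m ≤ departureCapacity x₀ n z := fun z => (hn z).trans (Nat.le_add_right _ _)
  have hm_le₁ := hm_le (x + 1)
  have h_const : ∀ b : ℕ, m ≤ 2 * b → ENNReal.ofReal (512 / b) ≤ ENNReal.ofReal (1024 / m) :=
    fun b hb => by
      refine ENNReal.ofReal_le_ofReal ?_
      rw [div_le_div_iff₀ (by norm_cast; omega) (by norm_cast)]
      norm_cast
      omega
  refine (measure_mono hT_le).trans ?_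
  rcases le_total (u₁ + if x + 1 ≤ x₀ then 1 else 0) k with h_le | h_le
  · refine (coinFlips_isTieProfile_le_left h_bal h_le (by omega)).trans ?_
    refine mul_le_mul' (h_const _ (by omega)) (le_add_right (measure_mono ?_))
    refine Set.inter_subset_inter_right _ fun w (hw : _ = _) => ?_
    rw [Set.mem_ofPred_eq, h₀, Nat.add_sub_cancel, hw, ← h₁]
  · refine (coinFlips_isTieProfile_le_right h_bal h_le (by omega)
      (hm.trans (hm_le _))).trans ?_
    refine mul_le_mul' (h_const _ (by omega)) (le_add_left (measure_mono ?_))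
    refine Set.inter_subset_inter_right _ fun w (hw : _ = _) => ?_
    rw [Set.mem_ofPred_eq, hw, ← h₂]

lemma tsum_measure_inter_le {α : Type*} [MeasurableSpace α] (ν : Measure α) (E : Set α)
    {A : ℕ → Set α} (hA : ∀ k, MeasurableSet (A k)) (h : Pairwise (Function.onFun Disjoint A)) :
    ∑' k, ν (E ∩ A k) ≤ ν E := by
  calc ∑' k, ν (E ∩ A k) = ∑' k, ν.restrict E (A k) :=
        tsum_congr fun k => by rw [Measure.restrict_apply (hA k), Set.inter_comm]
    _ = ν.restrict E (⋃ k, A k) := (measure_iUnion h hA).symm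
    _ ≤ ν E := (measure_mono (Set.subset_univ _)).trans_eq (Measure.restrict_apply_univ E)

lemma coinFlips_nat_setOf_exists (x₀ : ℤ) {E : ℕ → (ℕ → Bool) → Prop}
    (hE : ∀ t, DependsOn (E t) (Set.Iio t)) :
    coinFlips ℕ {f | ∃ t, E t f} = coinFlips (ℤ × ℕ) {w | ∃ t, E t (stackSteps x₀ w)} := by
  refine ((measurePreserving_stackSteps x₀).measure_preimage ?_).symm
  rw [Set.ofPred_exists]
  exact (MeasurableSet.iUnion fun t =>
    measurableSet_of_dependsOn (Set.finite_Iio t) (hE t)).nullMeasurableSet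

lemma coinFlips_tie_le (x₀ : ℤ) (n : ℤ → ℕ) (x : ℤ) {m : ℕ} (hm : 1 ≤ m) (hn : ∀ z, m ≤ n z) :
    coinFlips ℕ {f | ∃ t, TieAt x₀ n x t f} ≤ ENNReal.ofReal (1024 / m) *
      (coinFlips ℕ {f | ∃ t, SaturatesFirstAt x₀ n x t f} +
        coinFlips ℕ {f | ∃ t, SaturatesFirstAt x₀ n (x + 2) t f}) := by
  simp only [coinFlips_nat_setOf_exists x₀ (dependsOn_tieAt x₀ n x),
    coinFlips_nat_setOf_exists x₀ (dependsOn_saturatesFirstAt x₀ n _)]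
  calc _ ≤ coinFlips (ℤ × ℕ) (⋃ k, {w | ∃ t, TieAt x₀ n x t (stackSteps x₀ w)} ∩
          {w | arrowCount true w (x + 1) (departureCapacity x₀ n (x + 1)) = k}) :=
        measure_mono fun w hw => Set.mem_iUnion.2 ⟨_, hw, rfl⟩
    _ ≤ _ := measure_iUnion_le _
    _ ≤ _ := ENNReal.tsum_le_tsum fun k => coinFlips_tie_inter_le k hm hn
    _ ≤ _ := by
      rw [ENNReal.tsum_mul_left, ENNReal.tsum_add]
      gcongr
      · refine tsum_measure_inter_le _ _ (fun k => measurableSet_arrowCount true x _ (fun u =>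
          u + (if x + 1 ≤ x₀ then 1 else 0) + k = departureCapacity x₀ n (x + 1))) fun k k' hk =>
          Set.disjoint_left.2 fun w (hw : _ = _) (hw' : _ = _) => hk (by omega)
      · refine tsum_measure_inter_le _ _ (fun k => measurableSet_arrowCount true (x + 2) _ (fun u =>
          k + (if x + 2 ≤ x₀ then 1 else 0) + u = departureCapacity x₀ n (x + 2))) fun k k' hk =>
          Set.disjoint_left.2 fun w (hw : _ = _) (hw' : _ = _) => hk (by omega)

end Ties

section KraftInequality

variable {x₀ : ℤ} {n : ℤ → ℕ} {f : ℕ → Bool} {s t : ℕ}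

lemma visits_walk_lt (h : s < t) : visits x₀ f s (walk x₀ f t) < visits x₀ f t (walk x₀ f t) := by
  obtain ⟨k, rfl⟩ := Nat.exists_eq_succ_of_ne_zero (Nat.ne_zero_of_lt h)
  rw [visits_succ, if_pos rfl]
  exact Nat.lt_succ_of_le (visits_mono x₀ f _ (Nat.le_of_lt_succ h))

lemma TieAt.time_unique {x : ℤ} (hs : TieAt x₀ n x s f) (ht : TieAt x₀ n x t f) : ¬ s < t := by
  intro hst
  have h := visits_walk_lt (x₀ := x₀) (f := f) hst
  rw [ht.1, hs.2.1, ht.2.1] at h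
  exact h.false

/-- An up step and a down step after the first saturation bring the walk back to the saturated
site, so no later site can be the first to saturate. -/
lemma SaturatesFirstAt.not_later {z z' : ℤ} (hs : SaturatesFirstAt x₀ n z s f) (h_up : f s = true)
    (h_down : f (s + 1) = false) (ht : SaturatesFirstAt x₀ n z' t f) (h_up' : f t = true) :
    ¬ s < t := by
  intro hst
  have h_ne : t ≠ s + 1 := by rintro rfl; simp [h_down] at h_up'
  have h_back : walk x₀ f (s + 2) = z := by
    rw [walk_succ, walk_succ, h_up, h_down, hs.1]; simp [step]
  have h_over := visits_walk_lt (x₀ := x₀) (f := f) (show s < s + 2 by omega)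
  rw [h_back, hs.2.1] at h_over
  exact (h_over.trans_le (visits_mono x₀ f z (show s + 2 ≤ t by omega))).not_ge (ht.2.2 z)

lemma tsum_coinFlips_saturatesFirst_le (x₀ : ℤ) (n : ℤ → ℕ) :
    ∑' z, coinFlips ℕ {f | ∃ t, SaturatesFirstAt x₀ n z t f} ≤ 4 := by
  have h_meas : ∀ z t, MeasurableSet {f | SaturatesFirstAt x₀ n z t f} := fun z t =>
    measurableSet_of_dependsOn (Set.finite_Iio t) (dependsOn_saturatesFirstAt x₀ n z t)
  have h_dep : ∀ t, DependsOn (fun f => ∃ z, SaturatesFirstAt x₀ n z t f) (Set.Iio t) :=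
    fun t f g h => propext (exists_congr fun z => (dependsOn_saturatesFirstAt x₀ n z t h).to_iff)
  set C : ℕ → Set (ℕ → Bool) := fun t =>
    {f | (∃ z, SaturatesFirstAt x₀ n z t f) ∧ f t = true ∧ f (t + 1) = false}
  have hC_meas : ∀ t, MeasurableSet (C t) := fun t =>
    (measurableSet_of_dependsOn (Set.finite_Iio t) (h_dep t)).inter
      ((measurableSet_coin t true).inter (measurableSet_coin (t + 1) false))
  have hC_disj : Pairwise (Function.onFun Disjoint C) :=
    (pairwise_disjoint_on C).2 fun s t hst => Set.disjoint_left.2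
      fun f ⟨⟨_, hs⟩, h_up, h_down⟩ ⟨⟨_, ht⟩, h_up', _⟩ => hs.not_later h_up h_down ht h_up' hst
  calc ∑' z, coinFlips ℕ {f | ∃ t, SaturatesFirstAt x₀ n z t f}
      ≤ ∑' z, ∑' t, coinFlips ℕ {f | SaturatesFirstAt x₀ n z t f} :=
        ENNReal.tsum_le_tsum fun z => by rw [Set.ofPred_exists]; exact measure_iUnion_le _
    _ = ∑' t, ∑' z, coinFlips ℕ {f | SaturatesFirstAt x₀ n z t f} := ENNReal.tsum_comm
    _ = ∑' t, coinFlips ℕ {f | ∃ z, SaturatesFirstAt x₀ n z t f} := by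
        refine tsum_congr fun t => ?_
        rw [Set.ofPred_exists, measure_iUnion _ fun z => h_meas z t]
        exact fun z z' hz => Set.disjoint_left.2 fun f h h' => hz (h.1.symm.trans h'.1)
    _ = ∑' t, 4 * coinFlips ℕ (C t) := tsum_congr fun t => coinFlips_nat_eq_four_mul (h_dep t)
    _ = 4 * coinFlips ℕ (⋃ t, C t) := by rw [ENNReal.tsum_mul_left, measure_iUnion hC_disj hC_meas]
    _ ≤ 4 := mul_le_of_le_one_right' prob_le_one

lemma tsum_coinFlips_tieAt_le (x₀ : ℤ) {n : ℤ → ℕ} {m : ℕ} (hm : 1 ≤ m) (hn : ∀ z, m ≤ n z) :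
    ∑' x, ∑' t, coinFlips ℕ {f | TieAt x₀ n x t f} ≤ ENNReal.ofReal (8192 / m) := by
  set P : ℤ → ℝ≥0∞ := fun z => coinFlips ℕ {f | ∃ t, SaturatesFirstAt x₀ n z t f}
  have h_shift : ∑' x, P (x + 2) = ∑' x, P x := (Equiv.addRight (2 : ℤ)).tsum_eq P
  have h_kraft : ∑' x, P x ≤ 4 := tsum_coinFlips_saturatesFirst_le x₀ n
  calc ∑' x, ∑' t, coinFlips ℕ {f | TieAt x₀ n x t f}
      = ∑' x, coinFlips ℕ {f | ∃ t, TieAt x₀ n x t f} := by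
        refine tsum_congr fun x => ?_
        rw [Set.ofPred_exists, measure_iUnion]
        · exact (pairwise_disjoint_on _).2 fun s t hst => Set.disjoint_left.2
            fun f hs ht => TieAt.time_unique hs ht hst
        · exact fun t => measurableSet_of_dependsOn (Set.finite_Iio t) (dependsOn_tieAt x₀ n x t)
    _ ≤ ∑' x, ENNReal.ofReal (1024 / m) * (P x + P (x + 2)) :=
        ENNReal.tsum_le_tsum fun x => coinFlips_tie_le x₀ n x hm hn
    _ = ENNReal.ofReal (1024 / m) * (∑' x, P x + ∑' x, P x) := by
        rw [ENNReal.tsum_mul_left, ENNReal.tsum_add, h_shift]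
    _ ≤ ENNReal.ofReal (1024 / m) * (4 + 4) := by gcongr
    _ = ENNReal.ofReal (8192 / m) := by
        rw [show (4 : ℝ≥0∞) + 4 = ENNReal.ofReal 8 by norm_num,
          ← ENNReal.ofReal_mul (by positivity)]
        congr 1
        ring

end KraftInequality

section Recurrence

/-- At time `t` the most visited sites are the position of the walk and its two right neighbours,
each visited `h` times. -/
def TripleFavoriteAt (x₀ : ℤ) (h t : ℕ) (f : ℕ → Bool) : Prop :=
  ∀ z, visits x₀ f t z ≤ h ∧ (visits x₀ f t z = h ↔
    z = walk x₀ f t ∨ z = walk x₀ f t + 1 ∨ z = walk x₀ f t + 2)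

variable {x₀ : ℤ} {h h' s t : ℕ} {f g : ℕ → Bool}

lemma TripleFavoriteAt.level_lt (hs : TripleFavoriteAt x₀ h s f) (ht : TripleFavoriteAt x₀ h' t f)
    (hst : s < t) : h < h' := by
  by_contra! h_le
  have h_mono : ∀ z, visits x₀ f s z ≤ visits x₀ f t z := fun z => visits_mono x₀ f z hst.le
  have h_stay : ∀ z, visits x₀ f s z = h → visits x₀ f t z = h' := fun z hz => by
    have := h_mono z
    have := (ht z).1
    omega
  have h_left := (ht _).2.1 (h_stay _ ((hs (walk x₀ f s)).2.2 (.inl rfl)))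
  have h_right := (ht _).2.1 (h_stay _ ((hs (walk x₀ f s + 2)).2.2 (.inr (.inr rfl))))
  have h_walk : walk x₀ f t = walk x₀ f s := by omega
  have h_lt := visits_walk_lt (x₀ := x₀) (f := f) hst
  have h_top := (hs (walk x₀ f s)).2.2 (.inl rfl)
  have h_top' := (ht (walk x₀ f s)).1
  rw [h_walk] at h_lt
  omega

lemma TripleFavoriteAt.tieAt_of_splice
    (ht : TripleFavoriteAt x₀ h (s + t) (splice s f g)) :
    TieAt (walk x₀ f s) (fun z => h - visits x₀ f s z) (walk (walk x₀ f s) g t) t g := by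
  unfold TripleFavoriteAt at ht
  simp only [visits_splice_add, walk_splice_add] at ht
  have h_full : ∀ z, (z = walk (walk x₀ f s) g t ∨ z = walk (walk x₀ f s) g t + 1 ∨
      z = walk (walk x₀ f s) g t + 2) → visits (walk x₀ f s) g t z = h - visits x₀ f s z :=
    fun z hz => by
      have := (ht z).2.2 hz
      omega
  exact ⟨rfl, h_full _ (.inl rfl), h_full _ (.inr (.inl rfl)), h_full _ (.inr (.inr rfl)),
    fun z => Nat.le_sub_of_add_le' (ht z).1⟩

lemma TripleFavoriteAt.exists_tieAt_of_splice {r : ℕ} (hs : TripleFavoriteAt x₀ h s f)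
    (ht : TripleFavoriteAt x₀ h' (s + (r + 1)) (splice s f g)) :
    ∃ m ∈ Finset.Icc 1 h', ∃ x,
      TieAt (walk x₀ f s) (fun z => h + m - visits x₀ f s z) x (r + 1) g := by
  have hs' : TripleFavoriteAt x₀ h s (splice s f g) := by
    simpa only [TripleFavoriteAt, visits_splice_self, walk_splice_self] using hs
  have h_lt : h < h' := hs'.level_lt ht (by omega)
  refine ⟨h' - h, Finset.mem_Icc.2 ⟨by omega, by omega⟩, walk (walk x₀ f s) g (r + 1), ?_⟩
  rw [Nat.add_sub_cancel' h_lt.le]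
  exact ht.tieAt_of_splice

lemma sum_ofReal_div_le {c : ℝ} (hc : 0 ≤ c) (H : ℕ) :
    ∑ m ∈ Finset.Icc 1 H, ENNReal.ofReal (c / m) ≤ ENNReal.ofReal (c * (1 + Real.log H)) := by
  rw [← ENNReal.ofReal_sum_of_nonneg fun m _ => by positivity]
  have h_harmonic := harmonic_le_one_add_log H
  rw [harmonic_eq_sum_Icc] at h_harmonic
  push_cast at h_harmonic
  simp only [div_eq_mul_inv, ← Finset.mul_sum]
  gcongr

lemma tsum_coinFlips_splice_le (H : ℕ) (hs : TripleFavoriteAt x₀ h s f) :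
    ∑' r, coinFlips ℕ {g | ∃ h' ≤ H, TripleFavoriteAt x₀ h' (s + (r + 1)) (splice s f g)} ≤
      ENNReal.ofReal (8192 * (1 + Real.log H)) := by
  set tie : ℕ → ℤ → ℕ → Set (ℕ → Bool) := fun m x t =>
    {g | TieAt (walk x₀ f s) (fun z => h + m - visits x₀ f s z) x t g}
  have h_sub : ∀ r, {g | ∃ h' ≤ H, TripleFavoriteAt x₀ h' (s + (r + 1)) (splice s f g)} ⊆
      ⋃ m ∈ Finset.Icc 1 H, ⋃ x, tie m x (r + 1) := by
    rintro r g ⟨h', hH, ht⟩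
    obtain ⟨m, hm, x, h_tie⟩ := hs.exists_tieAt_of_splice ht
    exact Set.mem_biUnion (Finset.Icc_subset_Icc_right hH hm) (Set.mem_iUnion.2 ⟨x, h_tie⟩)
  calc _ ≤ ∑' r, ∑ m ∈ Finset.Icc 1 H, ∑' x, coinFlips ℕ (tie m x (r + 1)) :=
        ENNReal.tsum_le_tsum fun r => (measure_mono (h_sub r)).trans <|
          (measure_biUnion_finset_le _ _).trans <|
            Finset.sum_le_sum fun m _ => measure_iUnion_le _
    _ = ∑ m ∈ Finset.Icc 1 H, ∑' x, ∑' r, coinFlips ℕ (tie m x (r + 1)) := by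
        rw [Summable.tsum_finsetSum fun m _ => ENNReal.summable]
        exact Finset.sum_congr rfl fun m _ => ENNReal.tsum_comm
    _ ≤ ∑ m ∈ Finset.Icc 1 H, ∑' x, ∑' t, coinFlips ℕ (tie m x t) := by
        refine Finset.sum_le_sum fun m _ => ENNReal.tsum_le_tsum fun x => ?_
        exact ENNReal.tsum_comp_le_tsum_of_injective (add_left_injective 1)
          fun t => coinFlips ℕ (tie m x t)
    _ ≤ ∑ m ∈ Finset.Icc 1 H, ENNReal.ofReal (8192 / m) := by
        gcongr with m hm
        refine tsum_coinFlips_tieAt_le _ (Finset.mem_Icc.1 hm).1 fun z => ?_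
        have := (hs z).1
        omega
    _ ≤ _ := sum_ofReal_div_le (by norm_num) H

end Recurrence

section SecondMoment

lemma tsum_coinFlips_inter_le_of_splice {s : ℕ} {A : Set (ℕ → Bool)} (hA : MeasurableSet A)
    (hA_dep : DependsOn (· ∈ A) (Set.Iio s)) {B : ℕ → Set (ℕ → Bool)}
    (hB : ∀ r, MeasurableSet (B r)) {K : ℝ≥0∞}
    (hK : ∀ f ∈ A, ∑' r, coinFlips ℕ {g | splice s f g ∈ B r} ≤ K) :
    ∑' r, coinFlips ℕ (A ∩ B r) ≤ K * coinFlips ℕ A := by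
  have h_splice := measurePreserving_splice s
  have h_mem : ∀ f g, splice s f g ∈ A ↔ f ∈ A := fun f g =>
    iff_of_eq (hA_dep fun i hi => splice_of_lt f g s hi)
  have h_meas : ∀ r, MeasurableSet
      ((fun p : (ℕ → Bool) × (ℕ → Bool) => splice s p.1 p.2) ⁻¹' (A ∩ B r)) := fun r =>
    h_splice.measurable (hA.inter (hB r))
  calc ∑' r, coinFlips ℕ (A ∩ B r)
      = ∑' r, ∫⁻ f, coinFlips ℕ {g | splice s f g ∈ A ∩ B r} ∂coinFlips ℕ :=
        tsum_congr fun r => by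
          rw [← h_splice.measure_preimage (hA.inter (hB r)).nullMeasurableSet,
            Measure.prod_apply (h_meas r)]
          rfl
    _ = ∫⁻ f, ∑' r, coinFlips ℕ {g | splice s f g ∈ A ∩ B r} ∂coinFlips ℕ :=
        (lintegral_tsum fun r => (measurable_measure_prodMk_left (h_meas r)).aemeasurable).symm
    _ ≤ ∫⁻ f, A.indicator (fun _ => K) f ∂coinFlips ℕ := by
        refine lintegral_mono fun f => ?_
        by_cases hf : f ∈ A
        · simpa [hf, h_mem] using hK f hf
        · simp [hf, h_mem]
    _ = K * coinFlips ℕ A := lintegral_indicator_const hA K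

lemma tsum_tsum_le_two_mul_tsum_tsum_add {a : ℕ → ℕ → ℝ≥0∞} (ha : ∀ s t, a s t = a t s) :
    ∑' s, ∑' t, a s t ≤ 2 * ∑' s, ∑' d, a s (s + d) := by
  set b : ℕ → ℕ → ℝ≥0∞ := fun s t => if s ≤ t then a s t else 0
  have h_shift : ∀ s, ∑' t, b s t = ∑' d, a s (s + d) := fun s => by
    rw [← Summable.sum_add_tsum_nat_add' (k := s) ENNReal.summable,
      Finset.sum_eq_zero fun t ht => if_neg (Finset.mem_range.1 ht).not_ge, zero_add]
    exact tsum_congr fun d => by rw [add_comm d]; exact if_pos (Nat.le_add_right s d)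
  calc ∑' s, ∑' t, a s t ≤ ∑' s, ∑' t, (b s t + b t s) := by
        gcongr with s t
        rcases le_total s t with hst | hst
        · exact (if_pos hst).ge.trans le_self_add
        · exact ((ha s t).trans_le (if_pos hst).ge).trans le_add_self
    _ = 2 * ∑' s, ∑' t, b s t := by
        simp only [ENNReal.tsum_add]
        rw [ENNReal.tsum_comm (f := fun s t => b t s), two_mul]
    _ = 2 * ∑' s, ∑' d, a s (s + d) := by rw [tsum_congr h_shift]

variable {Ω : Type*} [MeasurableSpace Ω] {P : Measure Ω} {E : ℕ → Set Ω}

lemma lintegral_tsum_indicator_one (hE : ∀ t, MeasurableSet (E t)) :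
    ∫⁻ ω, ∑' t, (E t).indicator (1 : Ω → ℝ≥0∞) ω ∂P = ∑' t, P (E t) := by
  rw [lintegral_tsum fun t => (measurable_one.indicator (hE t)).aemeasurable]
  exact tsum_congr fun t => lintegral_indicator_one (hE t)

lemma lintegral_sq_tsum_indicator_one (hE : ∀ t, MeasurableSet (E t)) :
    ∫⁻ ω, (∑' t, (E t).indicator (1 : Ω → ℝ≥0∞) ω) ^ 2 ∂P = ∑' s, ∑' t, P (E s ∩ E t) := by
  have h_sq : ∀ ω, (∑' t, (E t).indicator (1 : Ω → ℝ≥0∞) ω) ^ 2 =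
      ∑' s, ∑' t, (E s ∩ E t).indicator (1 : Ω → ℝ≥0∞) ω := fun ω => by
    simp only [sq, ENNReal.tsum_mul_left, ENNReal.tsum_mul_right, Set.inter_indicator_one,
      Pi.mul_apply]
  have h_meas : ∀ s t, MeasurableSet (E s ∩ E t) := fun s t => (hE s).inter (hE t)
  simp only [h_sq]
  rw [lintegral_tsum fun s => (Measurable.tsum fun t =>
    measurable_one.indicator (h_meas s t)).aemeasurable]
  exact tsum_congr fun s => lintegral_tsum_indicator_one (h_meas s)

lemma lintegral_sq_tsum_indicator_le (hE : ∀ t, MeasurableSet (E t)) {K : ℝ≥0∞}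
    (hK : ∀ s, ∑' r, P (E s ∩ E (s + (r + 1))) ≤ K * P (E s)) :
    ∫⁻ ω, (∑' t, (E t).indicator (1 : Ω → ℝ≥0∞) ω) ^ 2 ∂P ≤
      2 * (1 + K) * ∫⁻ ω, ∑' t, (E t).indicator (1 : Ω → ℝ≥0∞) ω ∂P := by
  rw [lintegral_sq_tsum_indicator_one hE, lintegral_tsum_indicator_one hE]
  calc ∑' s, ∑' t, P (E s ∩ E t)
      ≤ 2 * ∑' s, ∑' d, P (E s ∩ E (s + d)) :=
        tsum_tsum_le_two_mul_tsum_tsum_add fun s t => by rw [Set.inter_comm]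
    _ = 2 * ∑' s, (P (E s) + ∑' r, P (E s ∩ E (s + (r + 1)))) := by
        refine congrArg (2 * ·) (tsum_congr fun s => ?_)
        rw [tsum_eq_zero_add' ENNReal.summable, add_zero, Set.inter_self]
    _ ≤ 2 * ∑' s, (1 + K) * P (E s) := by
        gcongr with s
        rw [add_mul, one_mul]
        gcongr
        exact hK s
    _ = 2 * (1 + K) * ∑' s, P (E s) := by rw [ENNReal.tsum_mul_left, mul_assoc]

end SecondMoment

section CountedTimes

variable (x₀ : ℤ) (window : ℕ → ℕ → Prop) (H k t : ℕ) (x : ℤ) (f : ℕ → Bool)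

/-- The number of steps from `x - 1` to `x` up to time `t`. -/
def upcrossings : ℕ :=
  ((Finset.Icc 1 t).filter fun i => walk x₀ f i = x ∧ walk x₀ f (i - 1) = x - 1).card

/-- The inverse upcrossing time `T_U(k, x)`, which is `0` if there are fewer than `k`
upcrossings. -/
noncomputable def inverseUpcrossing : ℕ := sInf {t | 1 ≤ t ∧ upcrossings x₀ t x f = k}

/-- The favorite sites `𝒦(t)`. -/
def favorites : Set ℤ := {y | ∀ z, visits x₀ f t z ≤ visits x₀ f t y}

/-- The time at which the triple `(h, k, x)` is examined: the inverse upcrossing time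
`T_U(k + 1, x)`. -/
noncomputable def examTime (p : ℕ × ℕ × ℕ) : ℕ := inverseUpcrossing x₀ (p.2.1 + 1) p.2.2 f

/-- The triple `(h, k, x)` contributes to `N_H`, where `window h k` stands for `k ∈ I_h`. -/
def IsCounted (p : ℕ × ℕ × ℕ) : Prop :=
  1 ≤ p.1 ∧ p.1 ≤ H ∧ 1 ≤ p.2.2 ∧ window p.1 p.2.1 ∧
    favorites x₀ (examTime x₀ f p) f = {(p.2.2 : ℤ), (p.2.2 : ℤ) + 1, (p.2.2 : ℤ) + 2} ∧
    visits x₀ f (examTime x₀ f p) p.2.2 = p.1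

/-- The times at which a triple contributing to `N_H` is examined. -/
def countedTimes : Set ℕ := examTime x₀ f '' {p | IsCounted x₀ window H f p}

lemma upcrossings_zero : upcrossings x₀ 0 x f = 0 := by simp [upcrossings]

lemma upcrossings_succ : upcrossings x₀ (t + 1) x f =
    upcrossings x₀ t x f + if walk x₀ f (t + 1) = x ∧ walk x₀ f t = x - 1 then 1 else 0 := by
  unfold upcrossings
  rw [← Finset.insert_Icc_right_eq_Icc_add_one (by omega), Finset.filter_insert, Nat.add_sub_cancel]
  split_ifs <;> simp

lemma dependsOn_upcrossings : DependsOn (upcrossings x₀ t x) (Set.Iio t) := by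
  intro f g h
  refine congrArg Finset.card (Finset.filter_congr fun i hi => ?_)
  have h_walk : ∀ j ≤ i, walk x₀ f j = walk x₀ g j := fun j hj =>
    dependsOn_walk x₀ j fun l hl => h l (by grind)
  rw [h_walk i le_rfl, h_walk (i - 1) (Nat.sub_le i 1)]

lemma dependsOn_favorites : DependsOn (favorites x₀ t) (Set.Iio t) := by
  intro f g h
  have h_visits : ∀ z, visits x₀ f t z = visits x₀ g t z := fun z => dependsOn_visits x₀ t z h
  simp only [favorites, h_visits]

variable {x₀ window H k t x f}

lemma inverseUpcrossing_eq_iff (ht : 1 ≤ t) : inverseUpcrossing x₀ k x f = t ↔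
    upcrossings x₀ t x f = k ∧ ∀ s, 1 ≤ s → s < t → upcrossings x₀ s x f ≠ k := by
  constructor
  · rintro rfl
    exact ⟨(Nat.sInf_mem (Nat.nonempty_of_pos_sInf ht)).2,
      fun s hs hst h => Nat.notMem_of_lt_sInf hst ⟨hs, h⟩⟩
  · rintro ⟨h_eq, h_ne⟩
    exact IsLeast.csInf_eq ⟨⟨ht, h_eq⟩, fun s hs => le_of_not_gt fun hst => h_ne s hs.1 hst hs.2⟩

lemma walk_inverseUpcrossing (ht : 1 ≤ t) (h : inverseUpcrossing x₀ (k + 1) x f = t) :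
    walk x₀ f t = x := by
  obtain ⟨h_eq, h_ne⟩ := (inverseUpcrossing_eq_iff ht).1 h
  obtain ⟨s, rfl⟩ := Nat.exists_eq_add_of_le' ht
  by_contra h_walk
  rw [upcrossings_succ, if_neg (by tauto), add_zero] at h_eq
  rcases s.eq_zero_or_pos with rfl | hs
  · simp [upcrossings_zero] at h_eq
  · exact h_ne s hs s.lt_succ_self h_eq

lemma tripleFavoriteAt_of_favorites_eq {h : ℕ} (h_walk : walk x₀ f t = x)
    (h_fav : favorites x₀ t f = {x, x + 1, x + 2}) (h_level : visits x₀ f t x = h) :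
    TripleFavoriteAt x₀ h t f := by
  have h_max : ∀ z, visits x₀ f t z ≤ h := by
    have : x ∈ favorites x₀ t f := by simp [h_fav]
    rwa [← h_level]
  intro z
  have h_mem : z ∈ favorites x₀ t f ↔ visits x₀ f t z = h :=
    ⟨fun hz => (h_max z).antisymm (h_level ▸ hz x), fun hz y => hz ▸ h_max y⟩
  rw [← h_mem, h_fav, h_walk]
  exact ⟨h_max z, Iff.rfl⟩

lemma IsCounted.one_le_examTime {p : ℕ × ℕ × ℕ} (hp : IsCounted x₀ window H f p) :
    1 ≤ examTime x₀ f p := by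
  obtain ⟨h_pos, -, -, -, -, h_level⟩ := hp
  by_contra h_zero
  rw [Nat.lt_one_iff.1 (not_le.1 h_zero), visits_zero] at h_level
  omega

lemma IsCounted.walk_examTime {p : ℕ × ℕ × ℕ} (hp : IsCounted x₀ window H f p) :
    walk x₀ f (examTime x₀ f p) = p.2.2 :=
  walk_inverseUpcrossing hp.one_le_examTime rfl

lemma injOn_examTime : Set.InjOn (examTime x₀ f) {p | IsCounted x₀ window H f p} := by
  rintro ⟨h, k, x⟩ hp ⟨h', k', x'⟩ hp' h_time
  have h_site : x = x' := by
    exact_mod_cast (hp.walk_examTime.symm.trans (congrArg _ h_time)).trans hp'.walk_examTime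
  subst h_site
  have h_up := ((inverseUpcrossing_eq_iff hp.one_le_examTime).1 rfl).1
  have h_up' := ((inverseUpcrossing_eq_iff hp'.one_le_examTime).1 rfl).1
  have h_level : visits x₀ f (examTime x₀ f (h, k, x)) x = h := hp.2.2.2.2.2
  have h_level' : visits x₀ f (examTime x₀ f (h', k', x)) x = h' := hp'.2.2.2.2.2
  rw [h_time] at h_up h_level
  simp_all

lemma tsum_isCounted : (∑' (h : ℕ) (k : ℕ) (x : ℕ),
    if IsCounted x₀ window H f (h, k, x) then (1 : ℝ≥0∞) else 0) =
      ∑' t, {f | t ∈ countedTimes x₀ window H f}.indicator 1 f := by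
  calc _ = ∑' p, {p | IsCounted x₀ window H f p}.indicator (1 : ℕ × ℕ × ℕ → ℝ≥0∞) p := by
        simp only [ENNReal.tsum_prod']
        rfl
    _ = ∑' _ : {p | IsCounted x₀ window H f p}, (1 : ℝ≥0∞) := (tsum_subtype _ _).symm
    _ = ∑' _ : countedTimes x₀ window H f, (1 : ℝ≥0∞) :=
        (tsum_image (fun _ => 1) injOn_examTime).symm
    _ = ∑' t, (countedTimes x₀ window H f).indicator (1 : ℕ → ℝ≥0∞) t :=
        tsum_subtype (countedTimes x₀ window H f) 1

variable (x₀ window H t)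

lemma dependsOn_mem_countedTimes :
    DependsOn (fun f => t ∈ countedTimes x₀ window H f) (Set.Iio t) := by
  suffices h_imp : ∀ f g : ℕ → Bool, (∀ i ∈ Set.Iio t, f i = g i) →
      t ∈ countedTimes x₀ window H f → t ∈ countedTimes x₀ window H g from fun f g h =>
    propext ⟨h_imp f g h, h_imp g f fun i hi => (h i hi).symm⟩
  rintro f g h ⟨p, hp, h_time⟩
  have ht : 1 ≤ t := h_time ▸ hp.one_le_examTime
  have h_up : ∀ s ≤ t, upcrossings x₀ s p.2.2 f = upcrossings x₀ s p.2.2 g := fun s hs =>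
    dependsOn_upcrossings x₀ s _ fun i hi => h i (hi.trans_le hs)
  have h_time' : examTime x₀ g p = t := by
    refine (inverseUpcrossing_eq_iff ht).2 ?_
    obtain ⟨h_eq, h_ne⟩ := (inverseUpcrossing_eq_iff ht).1 h_time
    exact ⟨h_up t le_rfl ▸ h_eq, fun s hs hst => h_up s hst.le ▸ h_ne s hs hst⟩
  refine ⟨p, ?_, h_time'⟩
  simp only [IsCounted, Set.mem_ofPred_eq, h_time, h_time'] at hp ⊢
  rwa [← dependsOn_favorites x₀ t h, ← show visits x₀ f t p.2.2 = visits x₀ g t p.2.2 from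
    dependsOn_visits x₀ t p.2.2 h]

lemma measurableSet_mem_countedTimes : MeasurableSet {f | t ∈ countedTimes x₀ window H f} :=
  measurableSet_of_dependsOn (Set.finite_Iio t) (dependsOn_mem_countedTimes x₀ window H t)

variable {x₀ window H t}

lemma exists_tripleFavoriteAt (ht : t ∈ countedTimes x₀ window H f) :
    ∃ h ≤ H, TripleFavoriteAt x₀ h t f := by
  obtain ⟨p, hp, rfl⟩ := ht
  exact ⟨p.1, hp.2.1,
    tripleFavoriteAt_of_favorites_eq hp.walk_examTime hp.2.2.2.2.1 hp.2.2.2.2.2⟩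

variable (x₀ window)

lemma tsum_coinFlips_countedTimes_inter_le (H s : ℕ) :
    ∑' r, coinFlips ℕ ({f | s ∈ countedTimes x₀ window H f} ∩
        {f | s + (r + 1) ∈ countedTimes x₀ window H f}) ≤
      ENNReal.ofReal (8192 * (1 + Real.log H)) *
        coinFlips ℕ {f | s ∈ countedTimes x₀ window H f} := by
  refine tsum_coinFlips_inter_le_of_splice (measurableSet_mem_countedTimes x₀ window H s)
    (dependsOn_mem_countedTimes x₀ window H s)
    (fun r => measurableSet_mem_countedTimes x₀ window H (s + (r + 1))) fun f hf => ?_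
  obtain ⟨h, -, hs⟩ := exists_tripleFavoriteAt hf
  refine le_trans (ENNReal.tsum_le_tsum fun r => measure_mono ?_) (tsum_coinFlips_splice_le H hs)
  exact fun g hg => exists_tripleFavoriteAt hg

lemma two_mul_one_add_ofReal_le {H : ℕ} (hH : 2 ≤ H) :
    2 * (1 + ENNReal.ofReal (8192 * (1 + Real.log H))) ≤ ENNReal.ofReal (50000 * Real.log H) := by
  have h_log : Real.log 2 ≤ Real.log H := Real.log_le_log (by norm_num) (by exact_mod_cast hH)
  have h_two := Real.log_two_gt_d9
  rw [← ENNReal.ofReal_one, ← ENNReal.ofReal_add (by norm_num) (by linarith),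
    ← ENNReal.ofReal_ofNat, ← ENNReal.ofReal_mul (by norm_num)]
  exact ENNReal.ofReal_le_ofReal (by linarith)

lemma lintegral_sq_countedTimes_le {H : ℕ} (hH : 2 ≤ H) :
    ∫⁻ f, (∑' t, {f | t ∈ countedTimes x₀ window H f}.indicator 1 f) ^ 2 ∂coinFlips ℕ ≤
      ENNReal.ofReal (50000 * Real.log H) *
        ∫⁻ f, ∑' t, {f | t ∈ countedTimes x₀ window H f}.indicator 1 f ∂coinFlips ℕ :=
  (lintegral_sq_tsum_indicator_le (measurableSet_mem_countedTimes x₀ window H)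
    (tsum_coinFlips_countedTimes_inter_le x₀ window H)).trans
    (mul_le_mul_left (two_mul_one_add_ofReal_le hH) _)

end CountedTimes

lemma ae_sum_eq_walk {Ω : Type*} [MeasurableSpace Ω] {P : Measure Ω} [IsProbabilityMeasure P]
    {ξ : ℕ → Ω → ℤ} (hξ : ∀ i, Measurable (ξ i)) (h_up : ∀ i, P {ω | ξ i ω = 1} = 2⁻¹)
    (h_down : ∀ i, P {ω | ξ i ω = -1} = 2⁻¹) :
    ∀ᵐ ω ∂P, ∀ t, ∑ i ∈ Finset.range t, ξ i ω = walk 0 (fun i => decide (ξ i ω = 1)) t := by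
  have h_pm : ∀ᵐ ω ∂P, ∀ i, ξ i ω = 1 ∨ ξ i ω = -1 := by
    refine ae_all_iff.2 fun i => ?_
    have h_up_meas : MeasurableSet {ω | ξ i ω = 1} := hξ i (MeasurableSet.singleton 1)
    have h_down_meas : MeasurableSet {ω | ξ i ω = -1} := hξ i (MeasurableSet.singleton (-1))
    refine (prob_compl_eq_zero_iff (h_up_meas.union h_down_meas)).2 ?_
    rw [measure_union _ h_down_meas, h_up, h_down, ENNReal.inv_two_add_inv_two]
    exact Set.disjoint_left.2 fun ω (h : _ = _) (h' : _ = _) => by omega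
  filter_upwards [h_pm] with ω hω t
  induction t with
  | zero => rfl
  | succ t ih =>
    rw [Finset.sum_range_succ, walk_succ, ih]
    rcases hω t with h | h <;> simp [h, step]

end FavoriteSites

open FavoriteSites in
theorem second_moment_upper_bound_general
    {Ω : Type*} [MeasurableSpace Ω] (μ : Measure Ω) [IsProbabilityMeasure μ]
    (ξ : ℕ → Ω → ℤ) (hξmeas : ∀ i, Measurable (ξ i))
    (hξindep : iIndepFun ξ μ)
    (hξ1 : ∀ i, μ {ω | ξ i ω = 1} = 1 / 2)
    (hξ2 : ∀ i, μ {ω | ξ i ω = -1} = 1 / 2)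
    (S : ℕ → Ω → ℤ) (hS : ∀ t ω, S t ω = ∑ i ∈ Finset.range t, ξ i ω)
    (L : ℕ → ℤ → Ω → ℕ)
    (hL : ∀ t x ω, L t x ω = ((Finset.Icc 1 t).filter fun k => S k ω = x).card)
    (Fav : ℕ → Ω → Set ℤ)
    (hFav : ∀ t ω, Fav t ω = {y : ℤ | ∀ z : ℤ, L t z ω ≤ L t y ω})
    (U : ℕ → ℤ → Ω → ℕ)
    (hU : ∀ t x ω, U t x ω =
      ((Finset.Icc 1 t).filter fun k => S k ω = x ∧ S (k - 1) ω = x - 1).card)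
    (TU : ℕ → ℤ → Ω → ℕ)
    (hTU : ∀ k x ω, TU k x ω = sInf {t : ℕ | 1 ≤ t ∧ U t x ω = k})
    (A : ℕ → ℕ → ℕ → Set Ω)
    (hA : ∀ x h k, A x h k = {ω |
      Fav (TU (k + 1) (x : ℤ) ω) ω = {(x : ℤ), (x : ℤ) + 1, (x : ℤ) + 2} ∧
      L (TU (k + 1) (x : ℤ) ω) (x : ℤ) ω = h})
    (inI : ℕ → ℕ → Prop)
    (NH : ℕ → Ω → ℝ≥0∞)
    (hNH : ∀ H ω, NH H ω = ∑' (h : ℕ) (k : ℕ) (x : ℕ),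
      if 1 ≤ h ∧ h ≤ H ∧ 1 ≤ x ∧ inI h k ∧ ω ∈ A x h k then (1 : ℝ≥0∞) else 0) :
    ∃ C : ℝ, 0 < C ∧ ∀ H : ℕ, 2 ≤ H →
      ∫⁻ ω, (NH H ω) ^ 2 ∂μ ≤ ENNReal.ofReal (C * Real.log H) * ∫⁻ ω, NH H ω ∂μ := by
  simp only [one_div] at hξ1 hξ2
  refine ⟨50000, by norm_num, fun H hH => ?_⟩
  set flips : Ω → ℕ → Bool := fun ω i => decide (ξ i ω = 1)
  have h_flips : MeasurePreserving flips μ (coinFlips ℕ) :=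
    measurePreserving_decide_eq_one hξmeas hξindep hξ1
  set count : (ℕ → Bool) → ℝ≥0∞ := fun f =>
    ∑' t, {f | t ∈ countedTimes 0 inI H f}.indicator 1 f
  have h_meas : Measurable count := Measurable.tsum fun t =>
    measurable_one.indicator (measurableSet_mem_countedTimes 0 inI H t)
  have h_count : NH H =ᵐ[μ] fun ω => count (flips ω) := by
    filter_upwards [ae_sum_eq_walk hξmeas hξ1 hξ2] with ω h_walk
    have hL' : ∀ t x, L t x ω = visits 0 (flips ω) t x := fun t x => by
      simp only [hL, hS, h_walk]; rfl
    have hFav' : ∀ t, Fav t ω = favorites 0 t (flips ω) := fun t => by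
      simp only [hFav, hL']; rfl
    have hTU' : ∀ k x, TU k x ω = inverseUpcrossing 0 k x (flips ω) := fun k x => by
      simp only [hTU, hU, hS, h_walk]; rfl
    simp only [hNH, hA, Set.mem_ofPred_eq, hL', hFav', hTU']
    convert tsum_isCounted
    rfl
  calc ∫⁻ ω, NH H ω ^ 2 ∂μ = ∫⁻ ω, count (flips ω) ^ 2 ∂μ :=
        lintegral_congr_ae (h_count.fun_comp (· ^ 2))
    _ = ∫⁻ f, count f ^ 2 ∂coinFlips ℕ :=
        h_flips.lintegral_comp (h_meas.pow_const 2)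
    _ ≤ ENNReal.ofReal (50000 * Real.log H) * ∫⁻ f, count f ∂coinFlips ℕ :=
        lintegral_sq_countedTimes_le 0 inI hH
    _ = ENNReal.ofReal (50000 * Real.log H) * ∫⁻ ω, NH H ω ∂μ := by
        rw [lintegral_congr_ae h_count, h_flips.lintegral_comp h_meas]

/-- There is a constant `C > 0` with `E[N_H²] ≤ C (log H) E[N_H]`
for all `H ≥ 2`. -/
theorem second_moment_upper_bound
    {Ω : Type*} [MeasurableSpace Ω] (μ : Measure Ω) [IsProbabilityMeasure μ]
    -- i.i.d. steps, each uniform on {−1, 1}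
    (ξ : ℕ → Ω → ℤ) (hξmeas : ∀ i, Measurable (ξ i))
    (hξindep : iIndepFun ξ μ)
    (hξ1 : ∀ i, μ {ω | ξ i ω = 1} = 1 / 2)
    (hξ2 : ∀ i, μ {ω | ξ i ω = -1} = 1 / 2)
    -- the simple random walk
    (S : ℕ → Ω → ℤ) (hS : ∀ t ω, S t ω = ∑ i ∈ Finset.range t, ξ i ω)
    -- local times
    (L : ℕ → ℤ → Ω → ℕ)
    (hL : ∀ t x ω, L t x ω = ((Finset.Icc 1 t).filter fun k => S k ω = x).card)
    -- favorite (most visited) sites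
    (Fav : ℕ → Ω → Set ℤ)
    (hFav : ∀ t ω, Fav t ω = {y : ℤ | ∀ z : ℤ, L t z ω ≤ L t y ω})
    -- upcrossing counts
    (U : ℕ → ℤ → Ω → ℕ)
    (hU : ∀ t x ω, U t x ω =
      ((Finset.Icc 1 t).filter fun k => S k ω = x ∧ S (k - 1) ω = x - 1).card)
    -- inverse upcrossing local times
    (TU : ℕ → ℤ → Ω → ℕ)
    (hTU : ∀ k x ω, TU k x ω = sInf {t : ℕ | 1 ≤ t ∧ U t x ω = k})
    -- the event of three consecutive favorite sites x, x+1, x+2, with local time h at x,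
    -- at the inverse upcrossing time T_U(k+1, x)
    (A : ℕ → ℕ → ℕ → Set Ω)
    (hA : ∀ x h k, A x h k = {ω |
      Fav (TU (k + 1) (x : ℤ) ω) ω = {(x : ℤ), (x : ℤ) + 1, (x : ℤ) + 2} ∧
      L (TU (k + 1) (x : ℤ) ω) (x : ℤ) ω = h})
    -- membership of k in the window I_h = ((h+√h)/2, (h+2√h)/2)
    (inI : ℕ → ℕ → Prop)
    (hinI : ∀ h k, inI h k ↔
      ((h : ℝ) + Real.sqrt h) / 2 < (k : ℝ) ∧ (k : ℝ) < ((h : ℝ) + 2 * Real.sqrt h) / 2)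
    -- the truncated count N_H of instances of three consecutive favorite sites
    (NH : ℕ → Ω → ℝ≥0∞)
    (hNH : ∀ H ω, NH H ω = ∑' (h : ℕ) (k : ℕ) (x : ℕ),
      if 1 ≤ h ∧ h ≤ H ∧ 1 ≤ x ∧ inI h k ∧ ω ∈ A x h k then (1 : ℝ≥0∞) else 0) :
    ∃ C : ℝ, 0 < C ∧ ∀ H : ℕ, 2 ≤ H →
      ∫⁻ ω, (NH H ω) ^ 2 ∂μ ≤ ENNReal.ofReal (C * Real.log H) * ∫⁻ ω, NH H ω ∂μ :=
  second_moment_upper_bound_general μ ξ hξmeas hξindep hξ1 hξ2 S hS L hL Fav hFav U hU TU hTU A hA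
    inI NH hNH
end
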